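/- Let d ≥ 2 and let b : ℤ³ → ℂ be symmetric in its three arguments with |b(n₁,n₂,n₃)| ≤ C min(|n₁n₂|, |n₂n₃|, |n₁n₃|) for all (n₁,n₂,n₃) ∈ ℤ³ and some C > 0. Then the bilinear operator 𝓑 is symmetric (𝓑(u,w) = 𝓑(w,u)), satisfies the Leibniz rule ∂_θ 𝓑(u,w) = 𝓑(∂_θ u, w) + 𝓑(u, ∂_θ w) (and hence at every order of θ-differentiation), and for every integer m₁ > d/2 + 2 there exists a constant C' such that for all real-valued Schwartz-class functions u, w on ℝ^{d−1} × 𝕋: |∫_{ℝ^{d−1}×𝕋} u · 𝓗(𝓑(u,w)) dy dθ| ≤ C' ‖w‖_{H^{m₁}} ‖u‖²_{L²}. -/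

import Mathlib

open MeasureTheory

noncomputable section

/-- `n`-fold directional derivative in the direction `v`. -/
def dIter {E F : Type*} [NormedAddCommGroup E] [NormedSpace ℝ E]
    [NormedAddCommGroup F] [NormedSpace ℝ F] (v : E) : ℕ → (E → F) → E → F
  | 0, f => f
  | n + 1, f => fun x => fderiv ℝ (dIter v n f) x v

/-- Total degree of a multi-index. -/
def mdeg {m : ℕ} (β : Fin m → ℕ) : ℕ := ∑ i, β i

/-- The `n`-th Fourier coefficient in `θ` of a `2π`-periodic function. -/
def fCoeff {m : ℕ} (w : (Fin m → ℝ) × ℝ → ℂ) (y : Fin m → ℝ) (n : ℤ) : ℂ :=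
  (1 / (2 * (Real.pi : ℂ))) *
    ∫ θ in (0 : ℝ)..(2 * Real.pi), w (y, θ) * Complex.exp (-Complex.I * (n : ℂ) * (θ : ℂ))

/-- The Hilbert transform in `θ`: `(𝓗u)^(y,n) = −i sgn(n) û(y,n)`. -/
def Hil {m : ℕ} (w : (Fin m → ℝ) × ℝ → ℂ) : (Fin m → ℝ) × ℝ → ℂ :=
  fun p => ∑' n : ℤ, (-Complex.I * ((n.sign : ℤ) : ℂ)) * fCoeff w p.1 n *
    Complex.exp (Complex.I * (n : ℂ) * (p.2 : ℂ))

/-- The bilinear Fourier multiplier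
`(𝓑(u,w))^(y,n) = −(1/(4πc₀)) Σ_{n'} b(−n, n−n', n') û(y,n−n') ŵ(y,n')`. -/
def Bil {m : ℕ} (c₀ : ℂ) (b : ℤ → ℤ → ℤ → ℂ) (u w : (Fin m → ℝ) × ℝ → ℂ) :
    (Fin m → ℝ) × ℝ → ℂ :=
  fun p => ∑' n : ℤ,
    (-(1 / (4 * (Real.pi : ℂ) * c₀)) *
        ∑' n' : ℤ, b (-n) (n - n') n' * fCoeff u p.1 (n - n') * fCoeff w p.1 n') *
      Complex.exp (Complex.I * (n : ℂ) * (p.2 : ℂ))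

/-- The fundamental domain `ℝ^{d−1} × (0,2π)` for `ℝ^{d−1} × 𝕋`. -/
def strip (m : ℕ) : Set ((Fin m → ℝ) × ℝ) := {p | p.2 ∈ Set.Ioo 0 (2 * Real.pi)}

/-- The squared `L²(ℝ^{d−1} × 𝕋)` norm. -/
def sqL2 {m : ℕ} (w : (Fin m → ℝ) × ℝ → ℂ) : ℝ := ∫ p in strip m, ‖w p‖ ^ 2

/-- The derivative `∂_y^α ∂_θ^j`. -/
def spThDeriv {m : ℕ} (α : Fin m → ℕ) (j : ℕ) (w : (Fin m → ℝ) × ℝ → ℂ) :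
    (Fin m → ℝ) × ℝ → ℂ :=
  dIter ((0 : Fin m → ℝ), (1 : ℝ)) j <|
    ((List.finRange m).map fun i =>
      dIter (Pi.single i (1 : ℝ), (0 : ℝ)) (α i)).foldr (fun op h => op h) w

/-- The squared Sobolev norm `‖w‖²_{H^s(ℝ^{d−1}×𝕋)} = Σ_{|α|≤s} ‖∂^α w‖²_{L²}`. -/
def sqHm {m : ℕ} (s : ℕ) (w : (Fin m → ℝ) × ℝ → ℂ) : ℝ :=
  ∑' q : {q : (Fin m → ℕ) × ℕ // mdeg q.1 + q.2 ≤ s}, sqL2 (spThDeriv q.1.1 q.1.2 w)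

/-- `2π`-periodicity in `θ`. -/
def Periodic2pi {m : ℕ} (w : (Fin m → ℝ) × ℝ → ℂ) : Prop :=
  ∀ y θ, w (y, θ + 2 * Real.pi) = w (y, θ)

/-- Real-valuedness. -/
def RealValued {m : ℕ} (w : (Fin m → ℝ) × ℝ → ℂ) : Prop := ∀ p, (w p).im = 0

/-- Schwartz-type decay in `y` of all derivatives. -/
def SchwartzDecay {m : ℕ} (w : (Fin m → ℝ) × ℝ → ℂ) : Prop :=
  ∀ (qn : ℕ) (α : Fin m → ℕ) (j : ℕ), ∃ Cq : ℝ, ∀ p : (Fin m → ℝ) × ℝ,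
    (1 + ‖p.1‖) ^ qn * ‖spThDeriv α j w p‖ ≤ Cq

/-- The kernel bound `|b(n₁,n₂,n₃)| ≤ C min(|n₁n₂|, |n₂n₃|, |n₁n₃|)`. -/
def KernelBound (b : ℤ → ℤ → ℤ → ℂ) (C : ℝ) : Prop :=
  ∀ n₁ n₂ n₃ : ℤ, ‖b n₁ n₂ n₃‖ ≤
    C * min (min |((n₁ * n₂ : ℤ) : ℝ)| |((n₂ * n₃ : ℤ) : ℝ)|) |((n₁ * n₃ : ℤ) : ℝ)|

/-- Symmetry of the kernel `b` in its three arguments. -/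
def KernelSymm (b : ℤ → ℤ → ℤ → ℂ) : Prop :=
  ∀ n₁ n₂ n₃ : ℤ, b n₁ n₂ n₃ = b n₂ n₁ n₃ ∧ b n₁ n₂ n₃ = b n₁ n₃ n₂


section PartOne
variable {m : ℕ}

lemma contDiff_dir {g : (Fin m → ℝ) × ℝ → ℂ} (hg : ContDiff ℝ (⊤ : ℕ∞) g)
    (v : (Fin m → ℝ) × ℝ) : ContDiff ℝ (⊤ : ℕ∞) (fun q => fderiv ℝ g q v) :=
  (hg.fderiv_right (m := (⊤ : ℕ∞)) (by simp)).clm_apply contDiff_const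

lemma periodic_dir {g : (Fin m → ℝ) × ℝ → ℂ} (hp : Periodic2pi g)
    (v : (Fin m → ℝ) × ℝ) : Periodic2pi (fun q => fderiv ℝ g q v) := by
  intro y θ
  have h : (fun q => g (q + ((0 : Fin m → ℝ), 2 * Real.pi))) = g := by
    funext q
    obtain ⟨a, t⟩ := q
    simpa using hp a t
  have h2 := fderiv_comp_add_right (𝕜 := ℝ) (f := g) (x := (y, θ)) ((0 : Fin m → ℝ), 2 * Real.pi)
  rw [h] at h2
  simp at h2
  simp [h2]

lemma fiber_cont {g : (Fin m → ℝ) × ℝ → ℂ} (hg : Continuous g) (y : Fin m → ℝ) :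
    Continuous (fun θ : ℝ => g (y, θ)) := hg.comp (by fun_prop)

lemma norm_exp_neg (n : ℤ) (θ : ℝ) : ‖Complex.exp (-Complex.I * (n : ℂ) * (θ : ℂ))‖ = 1 := by
  have : -Complex.I * (n : ℂ) * (θ : ℂ) = ((-(n * θ) : ℝ) : ℂ) * Complex.I := by push_cast; ring
  rw [this, Complex.norm_exp_ofReal_mul_I]

lemma norm_exp_pos (n : ℤ) (θ : ℝ) : ‖Complex.exp (Complex.I * (n : ℂ) * (θ : ℂ))‖ = 1 := by
  have : Complex.I * (n : ℂ) * (θ : ℂ) = (((n * θ) : ℝ) : ℂ) * Complex.I := by push_cast; ring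
  rw [this, Complex.norm_exp_ofReal_mul_I]

lemma fCoeff_dtheta {g : (Fin m → ℝ) × ℝ → ℂ} (hg : ContDiff ℝ (⊤ : ℕ∞) g) (hp : Periodic2pi g)
    (y : Fin m → ℝ) (n : ℤ) :
    fCoeff (fun q => fderiv ℝ g q ((0 : Fin m → ℝ), (1 : ℝ))) y n
      = Complex.I * n * fCoeff g y n := by
  unfold fCoeff
  have hd : ∀ θ : ℝ, HasDerivAt (fun θ : ℝ => g (y, θ)) (fderiv ℝ g (y, θ) (0, 1)) θ := by
    intro θ
    have h1 : HasFDerivAt g (fderiv ℝ g (y, θ)) (y, θ) :=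
      (hg.differentiable (by simp) _).hasFDerivAt
    have h2 : HasDerivAt (fun θ : ℝ => (y, θ)) ((0 : Fin m → ℝ), (1 : ℝ)) θ :=
      (hasDerivAt_const θ y).prodMk (hasDerivAt_id θ)
    exact h1.comp_hasDerivAt θ h2
  have he : ∀ θ : ℝ, HasDerivAt (fun θ : ℝ => Complex.exp (-Complex.I * (n : ℂ) * (θ : ℂ)))
      (Complex.exp (-Complex.I * (n : ℂ) * (θ : ℂ)) * (-Complex.I * n)) θ := by
    intro θ
    have := ((Complex.ofRealCLM.hasDerivAt (x := θ)).const_mul (-Complex.I * (n : ℂ))).cexp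
    simpa using this
  have hc1 : Continuous (fun θ : ℝ => fderiv ℝ g (y, θ) ((0 : Fin m → ℝ), (1 : ℝ))) :=
    fiber_cont (contDiff_dir hg _).continuous y
  have hc2 := fiber_cont hg.continuous y
  have key := intervalIntegral.integral_deriv_mul_eq_sub (a := 0) (b := 2 * Real.pi)
    (fun θ _ => hd θ) (fun θ _ => he θ) (hc1.intervalIntegrable _ _)
    (Continuous.intervalIntegrable (by fun_prop) _ _)
  have hb : g (y, 2 * Real.pi) * Complex.exp (-Complex.I * (n : ℂ) * ((2 * Real.pi : ℝ) : ℂ))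
      - g (y, 0) * Complex.exp (-Complex.I * (n : ℂ) * ((0 : ℝ) : ℂ)) = 0 := by
    have h1 := hp y 0
    rw [zero_add] at h1
    have h2 : Complex.exp (-Complex.I * (n : ℂ) * ((2 * Real.pi : ℝ) : ℂ)) = 1 := by
      have := Complex.exp_int_mul_two_pi_mul_I (-n)
      rw [← this]
      congr 1
      push_cast
      ring
    rw [h1, h2]
    simp
  rw [hb, intervalIntegral.integral_add] at key
  · have h3 : ∫ θ in (0 : ℝ)..(2 * Real.pi), g (y, θ) *
        (Complex.exp (-Complex.I * (n : ℂ) * (θ : ℂ)) * (-Complex.I * n)) =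
        (-Complex.I * n) * ∫ θ in (0 : ℝ)..(2 * Real.pi), g (y, θ) *
        Complex.exp (-Complex.I * (n : ℂ) * (θ : ℂ)) := by
      rw [← intervalIntegral.integral_const_mul]
      congr 1
      funext θ
      ring
    rw [h3] at key
    linear_combination (1 / (2 * (Real.pi : ℂ))) * key
  · exact Continuous.intervalIntegrable (by fun_prop) _ _
  · exact Continuous.intervalIntegrable (by fun_prop) _ _

/-- crude bound -/
lemma norm_fCoeff_le {g : (Fin m → ℝ) × ℝ → ℂ} {y : Fin m → ℝ} {K : ℝ}
    (hK : ∀ θ ∈ Set.Icc (0 : ℝ) (2 * Real.pi), ‖g (y, θ)‖ ≤ K) (n : ℤ) : ‖fCoeff g y n‖ ≤ K := by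
  unfold fCoeff
  have h : ‖∫ θ in (0 : ℝ)..(2 * Real.pi), g (y, θ) * Complex.exp (-Complex.I * (n : ℂ) * (θ : ℂ))‖
      ≤ K * |2 * Real.pi - 0| := by
    apply intervalIntegral.norm_integral_le_of_norm_le_const
    intro θ hθ
    rw [Set.uIoc_of_le Real.two_pi_pos.le] at hθ
    rw [norm_mul, norm_exp_neg, mul_one]
    exact hK θ ⟨hθ.1.le, hθ.2⟩
  rw [sub_zero, abs_of_pos Real.two_pi_pos] at h
  rw [norm_mul]
  have h4 : ‖(1 / (2 * (Real.pi : ℂ)))‖ = 1 / (2 * Real.pi) := by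
    simp [abs_of_pos Real.pi_pos]
  rw [h4]
  have := Real.pi_pos
  rw [div_mul_eq_mul_div, div_le_iff₀ (by positivity)]
  linarith

lemma fCoeff_hasFDerivAt {g : (Fin m → ℝ) × ℝ → ℂ} (hg : ContDiff ℝ (⊤ : ℕ∞) g) (n : ℤ)
    (y : Fin m → ℝ) :
    ∃ L : (Fin m → ℝ) →L[ℝ] ℂ, HasFDerivAt (fun y => fCoeff g y n) L y ∧
      (∀ v, L v = fCoeff (fun q => fderiv ℝ g q (v, 0)) y n) := by
  set e : ℝ → ℂ := fun θ => Complex.exp (-Complex.I * (n : ℂ) * (θ : ℂ)) with he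
  have hec : Continuous e := by rw [he]; fun_prop
  set inl := ContinuousLinearMap.inl ℝ (Fin m → ℝ) ℝ with hinl
  set F' : (Fin m → ℝ) → ℝ → ((Fin m → ℝ) →L[ℝ] ℂ) :=
    fun y θ => e θ • ((fderiv ℝ g (y, θ)).comp inl) with hF'
  have hfd : Continuous (fderiv ℝ g) := hg.continuous_fderiv (by simp)
  have hF'c : Continuous (fun p : (Fin m → ℝ) × ℝ => F' p.1 p.2) := by
    have h1 : Continuous (fun p : (Fin m → ℝ) × ℝ => e p.2) := by fun_prop
    have h2 : Continuous (fun p : (Fin m → ℝ) × ℝ => (fderiv ℝ g p).comp inl) :=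
      hfd.clm_comp continuous_const
    exact h1.fun_smul h2
  obtain ⟨K, hK⟩ := ((isCompact_closedBall y 1).prod
    (isCompact_Icc (a := (0 : ℝ)) (b := 2 * Real.pi))).exists_bound_of_continuousOn
    hF'c.continuousOn
  have hF'cy : Continuous (F' y) := hF'c.comp (f := fun θ : ℝ => (y, θ)) (by fun_prop)
  have main := intervalIntegral.hasFDerivAt_integral_of_dominated_of_fderiv_le (𝕜 := ℝ)
    (μ := volume) (a := 0) (b := 2 * Real.pi)
    (F := fun y θ => g (y, θ) * e θ) (F' := F') (x₀ := y) (bound := fun _ => K)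
    (Metric.closedBall_mem_nhds y one_pos)
    (Filter.Eventually.of_forall fun x =>
      ((fiber_cont hg.continuous x).mul hec).aestronglyMeasurable)
    (((fiber_cont hg.continuous y).mul hec).intervalIntegrable _ _)
    hF'cy.aestronglyMeasurable
    (Filter.Eventually.of_forall fun θ hθ x hx => by
      rw [Set.uIoc_of_le Real.two_pi_pos.le] at hθ
      exact hK (x, θ) ⟨hx, hθ.1.le, hθ.2⟩)
    (by simp)
    (Filter.Eventually.of_forall fun θ hθ x hx => by
      have h1 : HasFDerivAt g (fderiv ℝ g (x, θ)) (x, θ) :=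
        (hg.differentiable (by simp) _).hasFDerivAt
      have h2 : HasFDerivAt (fun x : Fin m → ℝ => (x, θ)) inl x := hasFDerivAt_prodMk_left x θ
      have h3 := (h1.comp x h2).mul_const (e θ)
      exact h3)
  have hint : IntervalIntegrable (F' y) volume 0 (2 * Real.pi) := hF'cy.intervalIntegrable _ _
  refine ⟨_, main.const_mul (1 / (2 * (Real.pi : ℂ))), ?_⟩
  intro v
  have h5 := ContinuousLinearMap.intervalIntegral_apply hint v
  simp only [smul_apply, smul_eq_mul, fCoeff]
  rw [h5]
  congr 1
  congr 1
  funext θ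
  simp [hF', hinl, e]
  ring

lemma fCoeff_continuous {g : (Fin m → ℝ) × ℝ → ℂ} (hg : ContDiff ℝ (⊤ : ℕ∞) g) (n : ℤ) :
    Continuous (fun y => fCoeff g y n) := by
  rw [continuous_iff_continuousAt]
  intro y
  obtain ⟨L, h, -⟩ := fCoeff_hasFDerivAt hg n y
  exact h.continuousAt

lemma contDiff_thIter {g : (Fin m → ℝ) × ℝ → ℂ} (hg : ContDiff ℝ (⊤ : ℕ∞) g)
    (v : (Fin m → ℝ) × ℝ) (k : ℕ) : ContDiff ℝ (⊤ : ℕ∞) (dIter v k g) := by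
  induction k with
  | zero => exact hg
  | succ k ih => exact contDiff_dir ih v

lemma periodic_thIter {g : (Fin m → ℝ) × ℝ → ℂ} (hg : Periodic2pi g)
    (v : (Fin m → ℝ) × ℝ) (k : ℕ) : Periodic2pi (dIter v k g) := by
  induction k with
  | zero => exact hg
  | succ k ih => exact periodic_dir ih v

lemma fCoeff_thIter {g : (Fin m → ℝ) × ℝ → ℂ} (hg : ContDiff ℝ (⊤ : ℕ∞) g) (hp : Periodic2pi g)
    (y : Fin m → ℝ) (n : ℤ) (k : ℕ) :
    fCoeff (dIter ((0 : Fin m → ℝ), (1 : ℝ)) k g) y n = (Complex.I * n) ^ k * fCoeff g y n := by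
  induction k with
  | zero => simp [dIter]
  | succ k ih =>
    have := fCoeff_dtheta (contDiff_thIter hg ((0 : Fin m → ℝ), (1 : ℝ)) k)
      (periodic_thIter hp ((0 : Fin m → ℝ), (1 : ℝ)) k) y n
    rw [ih] at this
    rw [dIter, this]
    ring

end PartOne


section PartTwo
variable {m : ℕ}

def wt (n : ℤ) : ℝ := 1 + |(n : ℝ)|

lemma wt_one_le (n : ℤ) : 1 ≤ wt n := by unfold wt; linarith [abs_nonneg (n : ℝ)]

lemma wt_pos (n : ℤ) : 0 < wt n := lt_of_lt_of_le one_pos (wt_one_le n)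

lemma wt_add (k l : ℤ) : wt (k + l) ≤ wt k * wt l := by
  unfold wt
  have h1 := abs_add_le (k : ℝ) (l : ℝ)
  have h2 := mul_nonneg (abs_nonneg (k : ℝ)) (abs_nonneg (l : ℝ))
  push_cast
  nlinarith

lemma summable_wt : Summable (fun n : ℤ => (wt n ^ 2)⁻¹) := by
  have h0 : Summable (fun n : ℕ => (((n : ℝ) + 1) ^ 2)⁻¹) := by
    have := (summable_nat_add_iff 1).2 (Real.summable_nat_pow_inv (p := 2) |>.2 (by norm_num))
    simpa using this
  apply Summable.of_nat_of_neg
  · refine h0.congr fun n => ?_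
    simp [wt, add_comm]
  · refine h0.congr fun n => ?_
    simp [wt, add_comm]

def shearE : ℤ × ℤ ≃ ℤ × ℤ where
  toFun q := (q.1 - q.2, q.2)
  invFun q := (q.1 + q.2, q.2)
  left_inv q := by simp
  right_inv q := by simp

lemma summable_wt_prod :
    Summable (fun q : ℤ × ℤ => (wt (q.1 - q.2) ^ 2)⁻¹ * (wt q.2 ^ 2)⁻¹) := by
  have h := Summable.mul_of_nonneg summable_wt summable_wt
    (fun n => by positivity) (fun n => by positivity)
  exact shearE.summable_iff.2 h

lemma fCoeff_bdd {g : (Fin m → ℝ) × ℝ → ℂ} (hg : ContDiff ℝ (⊤ : ℕ∞) g) (y₀ : Fin m → ℝ) :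
    ∃ K : ℝ, 0 ≤ K ∧ ∀ y ∈ Metric.ball y₀ 1, ∀ n : ℤ, ‖fCoeff g y n‖ ≤ K ∧
      ‖fderiv ℝ (fun y => fCoeff g y n) y‖ ≤ K := by
  have hfd : Continuous (fderiv ℝ g) := hg.continuous_fderiv (by simp)
  have hcomp := (isCompact_closedBall y₀ 1).prod
    (isCompact_Icc (a := (0 : ℝ)) (b := 2 * Real.pi))
  obtain ⟨K1, hK1⟩ := hcomp.exists_bound_of_continuousOn hg.continuous.continuousOn
  obtain ⟨K2, hK2⟩ := hcomp.exists_bound_of_continuousOn hfd.continuousOn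
  refine ⟨max (max K1 K2) 0, le_max_right _ _, fun y hy n => ⟨?_, ?_⟩⟩
  · refine norm_fCoeff_le (fun θ hθ => ?_) n
    exact (hK1 (y, θ) ⟨Metric.ball_subset_closedBall hy, hθ⟩).trans
      ((le_max_left _ _).trans (le_max_left _ _))
  · obtain ⟨L, hL, hLv⟩ := fCoeff_hasFDerivAt hg n y
    rw [hL.fderiv]
    refine ContinuousLinearMap.opNorm_le_bound _ (le_max_right _ _) fun v => ?_
    rw [hLv]
    refine norm_fCoeff_le (fun θ hθ => ?_) n
    have h1 := hK2 (y, θ) ⟨Metric.ball_subset_closedBall hy, hθ⟩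
    have h2 : K2 ≤ max (max K1 K2) 0 := (le_max_right _ _).trans (le_max_left _ _)
    have h3 := (fderiv ℝ g (y, θ)).le_opNorm (v, 0)
    have h4 : ‖((v, 0) : (Fin m → ℝ) × ℝ)‖ = ‖v‖ := by simp [Prod.norm_def]
    rw [h4] at h3
    exact h3.trans (by gcongr; exact h1.trans h2)

lemma decay_aux {x K : ℝ} {n : ℤ} (h1 : x ≤ K) (h2 : |(n : ℝ)| ^ 4 * x ≤ K) (hx : 0 ≤ x) :
    x ≤ 16 * K * (wt n ^ 4)⁻¹ := by
  rw [← div_eq_mul_inv, le_div_iff₀ (pow_pos (wt_pos n) 4)]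
  unfold wt
  by_cases hn : n = 0
  · subst hn; simp; linarith
  · have : (1 : ℝ) ≤ |(n : ℝ)| := by exact_mod_cast Int.one_le_abs hn
    have h3 : (1 + |(n : ℝ)|) ^ 4 ≤ (2 * |(n : ℝ)|) ^ 4 := by gcongr; linarith
    calc x * (1 + |(n : ℝ)|) ^ 4 ≤ x * (2 * |(n : ℝ)|) ^ 4 := by gcongr
      _ = 16 * (|(n : ℝ)| ^ 4 * x) := by ring
      _ ≤ 16 * K := by linarith

lemma fCoeff_decay {g : (Fin m → ℝ) × ℝ → ℂ} (hg : ContDiff ℝ (⊤ : ℕ∞) g) (hp : Periodic2pi g)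
    (y₀ : Fin m → ℝ) :
    ∃ K : ℝ, 0 ≤ K ∧ ∀ y ∈ Metric.ball y₀ 1, ∀ n : ℤ, ‖fCoeff g y n‖ ≤ K * (wt n ^ 4)⁻¹ ∧
      ‖fderiv ℝ (fun y => fCoeff g y n) y‖ ≤ K * (wt n ^ 4)⁻¹ := by
  obtain ⟨K1, hK1p, hK1⟩ := fCoeff_bdd hg y₀
  obtain ⟨K2, hK2p, hK2⟩ := fCoeff_bdd (contDiff_thIter hg ((0 : Fin m → ℝ), (1 : ℝ)) 4) y₀
  refine ⟨16 * (K1 + K2), by positivity, fun y hy n => ⟨?_, ?_⟩⟩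
  · have h1 := (hK1 y hy n).1
    have h2 := (hK2 y hy n).1
    rw [fCoeff_thIter hg hp] at h2
    simp only [norm_mul, norm_pow, Complex.norm_I, one_mul, Complex.norm_intCast] at h2
    exact decay_aux (by linarith) (by linarith) (norm_nonneg _)
  · have h1 := (hK1 y hy n).2
    have h2 := (hK2 y hy n).2
    have h3 : (fun y => fCoeff (dIter ((0 : Fin m → ℝ), (1 : ℝ)) 4 g) y n) =
        fun y => (Complex.I * n) ^ 4 * fCoeff g y n := by
      funext y
      exact fCoeff_thIter hg hp y n 4
    obtain ⟨L, hL, -⟩ := fCoeff_hasFDerivAt hg n y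
    rw [h3, (hL.const_mul _).fderiv] at h2
    rw [hL.fderiv] at h1 ⊢
    rw [norm_smul] at h2
    simp only [norm_mul, norm_pow, Complex.norm_I, one_mul, Complex.norm_intCast] at h2
    exact decay_aux (by linarith) (by linarith) (norm_nonneg _)

def bterm (c₀ : ℂ) (b : ℤ → ℤ → ℤ → ℂ) (u w : (Fin m → ℝ) × ℝ → ℂ) (q : ℤ × ℤ)
    (p : (Fin m → ℝ) × ℝ) : ℂ :=
  (-(1 / (4 * (Real.pi : ℂ) * c₀)) * b (-q.1) (q.1 - q.2) q.2) *
    ((fCoeff u p.1 (q.1 - q.2) * fCoeff w p.1 q.2) * Complex.exp (Complex.I * (q.1 : ℂ) * (p.2 : ℂ)))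

lemma kernel_le {b : ℤ → ℤ → ℤ → ℂ} {C : ℝ} (hC : 0 < C) (hbnd : KernelBound b C) (n n' : ℤ) :
    ‖b (-n) (n - n') n'‖ ≤ C * (wt (n - n') * wt n') := by
  refine (hbnd _ _ _).trans ?_
  gcongr
  refine (min_le_left _ _).trans ((min_le_right _ _).trans ?_)
  push_cast
  rw [abs_mul]
  unfold wt
  push_cast
  gcongr <;> linarith

lemma bterm_norm_le {c₀ : ℂ} {b : ℤ → ℤ → ℤ → ℂ} {C : ℝ} (hC : 0 < C)
    (hbnd : KernelBound b C) {u w : (Fin m → ℝ) × ℝ → ℂ} {y : Fin m → ℝ} {K K' : ℝ}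
    (hK : 0 ≤ K)
    (hu : ∀ n : ℤ, ‖fCoeff u y n‖ ≤ K * (wt n ^ 4)⁻¹)
    (hw : ∀ n : ℤ, ‖fCoeff w y n‖ ≤ K' * (wt n ^ 4)⁻¹) (q : ℤ × ℤ) :
    ‖b (-q.1) (q.1 - q.2) q.2 * (fCoeff u y (q.1 - q.2) * fCoeff w y q.2)‖ ≤
      (C * K * K') * ((wt (q.1 - q.2) ^ 2)⁻¹ * (wt q.2 ^ 2)⁻¹) := by
  have hK' : 0 ≤ K' := by
    have := (norm_nonneg _).trans (hw 0)
    simpa [wt] using this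
  have h1 := wt_one_le (q.1 - q.2)
  have h2 := wt_one_le q.2
  have hb := kernel_le hC hbnd q.1 q.2
  have hu1 := hu (q.1 - q.2)
  have hw1 := hw q.2
  set x := wt (q.1 - q.2)
  set z := wt q.2
  have hx0 : 0 < x := by linarith
  have hz0 : 0 < z := by linarith
  rw [norm_mul, norm_mul]
  calc _ ≤ C * (x * z) * ((K * (x ^ 4)⁻¹) * (K' * (z ^ 4)⁻¹)) := by gcongr
    _ = (C * K * K') * ((x ^ 3)⁻¹ * (z ^ 3)⁻¹) := by field_simp
    _ ≤ _ := by
      gcongr <;> norm_num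

lemma bterm_summable {c₀ : ℂ} {b : ℤ → ℤ → ℤ → ℂ} {C : ℝ} (hC : 0 < C)
    (hbnd : KernelBound b C) {u w : (Fin m → ℝ) × ℝ → ℂ}
    (hu : ContDiff ℝ (⊤ : ℕ∞) u) (hw : ContDiff ℝ (⊤ : ℕ∞) w)
    (hup : Periodic2pi u) (hwp : Periodic2pi w) (y : Fin m → ℝ) :
    Summable (fun q : ℤ × ℤ =>
      ‖b (-q.1) (q.1 - q.2) q.2 * (fCoeff u y (q.1 - q.2) * fCoeff w y q.2)‖) := by
  obtain ⟨K, hK, hKu⟩ := fCoeff_decay hu hup y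
  obtain ⟨K', hK', hKw⟩ := fCoeff_decay hw hwp y
  have hy := Metric.mem_ball_self (x := y) one_pos
  exact Summable.of_nonneg_of_le (fun q => norm_nonneg _)
    (fun q => bterm_norm_le (c₀ := c₀) hC hbnd hK (fun n => (hKu y hy n).1)
      (fun n => (hKw y hy n).1) q)
    (summable_wt_prod.mul_left _)

lemma bterm_summable' {c₀ : ℂ} {b : ℤ → ℤ → ℤ → ℂ} {C : ℝ} (hC : 0 < C)
    (hbnd : KernelBound b C) {u w : (Fin m → ℝ) × ℝ → ℂ}
    (hu : ContDiff ℝ (⊤ : ℕ∞) u) (hw : ContDiff ℝ (⊤ : ℕ∞) w)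
    (hup : Periodic2pi u) (hwp : Periodic2pi w) (p : (Fin m → ℝ) × ℝ) :
    Summable (fun q : ℤ × ℤ => bterm c₀ b u w q p) := by
  apply Summable.of_norm
  refine ((bterm_summable (c₀ := c₀) hC hbnd hu hw hup hwp p.1).mul_left
    ‖(-(1 / (4 * (Real.pi : ℂ) * c₀)))‖).congr fun q => ?_
  unfold bterm
  simp only [norm_mul, norm_exp_pos]
  ring

lemma Bil_eq {c₀ : ℂ} {b : ℤ → ℤ → ℤ → ℂ} {C : ℝ} (hC : 0 < C)
    (hbnd : KernelBound b C) {u w : (Fin m → ℝ) × ℝ → ℂ}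
    (hu : ContDiff ℝ (⊤ : ℕ∞) u) (hw : ContDiff ℝ (⊤ : ℕ∞) w)
    (hup : Periodic2pi u) (hwp : Periodic2pi w) (p : (Fin m → ℝ) × ℝ) :
    Bil c₀ b u w p = ∑' q : ℤ × ℤ, bterm c₀ b u w q p := by
  rw [(bterm_summable' hC hbnd hu hw hup hwp p).tsum_prod]
  unfold Bil bterm
  congr 1
  funext n
  rw [← tsum_mul_left, ← tsum_mul_right]
  congr 1
  funext n'
  ring

lemma Bil_symm {c₀ : ℂ} {b : ℤ → ℤ → ℤ → ℂ} (hsym : KernelSymm b)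
    (u w : (Fin m → ℝ) × ℝ → ℂ) : Bil c₀ b u w = Bil c₀ b w u := by
  funext p
  unfold Bil
  congr 1
  funext n
  congr 2
  rw [← (Equiv.subLeft n).tsum_eq]
  congr 1
  funext n'
  simp only [Equiv.subLeft_apply, sub_sub_cancel]
  rw [(hsym (-n) n' (n - n')).2]
  ring

lemma Bil_leibniz {c₀ : ℂ} {b : ℤ → ℤ → ℤ → ℂ} {C : ℝ} (hC : 0 < C)
    (hbnd : KernelBound b C) {u w : (Fin m → ℝ) × ℝ → ℂ}
    (hu : ContDiff ℝ (⊤ : ℕ∞) u) (hw : ContDiff ℝ (⊤ : ℕ∞) w)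
    (hup : Periodic2pi u) (hwp : Periodic2pi w) (p : (Fin m → ℝ) × ℝ) :
    fderiv ℝ (Bil c₀ b u w) p ((0 : Fin m → ℝ), (1 : ℝ)) =
          Bil c₀ b (fun q => fderiv ℝ u q ((0 : Fin m → ℝ), (1 : ℝ))) w p +
            Bil c₀ b u (fun q => fderiv ℝ w q ((0 : Fin m → ℝ), (1 : ℝ))) p := by
  obtain ⟨K, hK, hKu⟩ := fCoeff_decay hu hup p.1
  obtain ⟨K', hK', hKw⟩ := fCoeff_decay hw hwp p.1
  set κ : ℂ := -(1 / (4 * (Real.pi : ℂ) * c₀)) with hκ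
  set s : Set ((Fin m → ℝ) × ℝ) := Metric.ball p 1 with hs
  have hs1 : ∀ x ∈ s, x.1 ∈ Metric.ball p.1 1 := by
    intro x hx
    rw [hs, Metric.mem_ball, Prod.dist_eq] at hx
    exact Metric.mem_ball.2 ((le_max_left _ _).trans_lt hx)
  let F' : ℤ × ℤ → ((Fin m → ℝ) × ℝ) → (((Fin m → ℝ) × ℝ) →L[ℝ] ℂ) := fun q x =>
    (κ * b (-q.1) (q.1 - q.2) q.2) •
      ((fCoeff u x.1 (q.1 - q.2) * fCoeff w x.1 q.2) •
        ((Complex.exp (Complex.I * (q.1 : ℂ) * (x.2 : ℂ)) * (Complex.I * q.1)) •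
          (Complex.ofRealCLM.comp (ContinuousLinearMap.snd ℝ (Fin m → ℝ) ℝ))) +
       Complex.exp (Complex.I * (q.1 : ℂ) * (x.2 : ℂ)) •
        (fCoeff u x.1 (q.1 - q.2) • ((fderiv ℝ (fun y => fCoeff w y q.2) x.1).comp
            (ContinuousLinearMap.fst ℝ (Fin m → ℝ) ℝ)) +
         fCoeff w x.1 q.2 • ((fderiv ℝ (fun y => fCoeff u y (q.1 - q.2)) x.1).comp
            (ContinuousLinearMap.fst ℝ (Fin m → ℝ) ℝ))))
  have hF' : ∀ q x, x ∈ s → HasFDerivAt (bterm c₀ b u w q) (F' q x) x := by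
    intro q x hx
    have hU : ∀ n, HasFDerivAt (fun x : (Fin m → ℝ) × ℝ => fCoeff u x.1 n)
        ((fderiv ℝ (fun y => fCoeff u y n) x.1).comp (ContinuousLinearMap.fst ℝ (Fin m → ℝ) ℝ))
        x := by
      intro n
      obtain ⟨L, hL, -⟩ := fCoeff_hasFDerivAt hu n x.1
      exact (hL.differentiableAt.hasFDerivAt).comp x hasFDerivAt_fst
    have hW : ∀ n, HasFDerivAt (fun x : (Fin m → ℝ) × ℝ => fCoeff w x.1 n)
        ((fderiv ℝ (fun y => fCoeff w y n) x.1).comp (ContinuousLinearMap.fst ℝ (Fin m → ℝ) ℝ))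
        x := by
      intro n
      obtain ⟨L, hL, -⟩ := fCoeff_hasFDerivAt hw n x.1
      exact (hL.differentiableAt.hasFDerivAt).comp x hasFDerivAt_fst
    have hE : HasFDerivAt (fun x : (Fin m → ℝ) × ℝ =>
        Complex.exp (Complex.I * (q.1 : ℂ) * (x.2 : ℂ)))
        ((Complex.exp (Complex.I * (q.1 : ℂ) * (x.2 : ℂ)) * (Complex.I * q.1)) •
          (Complex.ofRealCLM.comp (ContinuousLinearMap.snd ℝ (Fin m → ℝ) ℝ))) x := by
      have h0 : HasFDerivAt (fun x : (Fin m → ℝ) × ℝ => (x.2 : ℂ))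
          (Complex.ofRealCLM.comp (ContinuousLinearMap.snd ℝ (Fin m → ℝ) ℝ)) x :=
        (Complex.ofRealCLM.comp (ContinuousLinearMap.snd ℝ (Fin m → ℝ) ℝ)).hasFDerivAt
      have h1 := (h0.const_mul (Complex.I * (q.1 : ℂ))).cexp
      rwa [smul_smul] at h1
    exact (((hU (q.1 - q.2)).mul (hW q.2)).mul hE).const_mul _
  have hbound : ∀ q x, x ∈ s → ‖F' q x‖ ≤
      (3 * ‖κ‖ * C * K * K') * ((wt (q.1 - q.2) ^ 2)⁻¹ * (wt q.2 ^ 2)⁻¹) := by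
    intro q x hx
    have h1 := wt_one_le (q.1 - q.2)
    have h2 := wt_one_le q.2
    have hb := kernel_le hC hbnd q.1 q.2
    obtain ⟨hu1, hu2⟩ := hKu x.1 (hs1 x hx) (q.1 - q.2)
    obtain ⟨hw1, hw2⟩ := hKw x.1 (hs1 x hx) q.2
    have hn : |(q.1 : ℝ)| ≤ wt (q.1 - q.2) * wt q.2 := by
      have := wt_add (q.1 - q.2) q.2
      rw [sub_add_cancel] at this
      unfold wt at this ⊢
      linarith
    set x' := wt (q.1 - q.2)
    set z := wt q.2
    have hx0 : 0 < x' := by linarith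
    have hz0 : 0 < z := by linarith
    have hfst : ‖ContinuousLinearMap.fst ℝ (Fin m → ℝ) ℝ‖ ≤ 1 :=
      ContinuousLinearMap.norm_fst_le _ _ _
    have hA := (ContinuousLinearMap.opNorm_comp_le (fderiv ℝ (fun y => fCoeff u y (q.1 - q.2)) x.1)
      (ContinuousLinearMap.fst ℝ (Fin m → ℝ) ℝ)).trans
      (mul_le_of_le_one_right (norm_nonneg _) hfst)
    have hB := (ContinuousLinearMap.opNorm_comp_le (fderiv ℝ (fun y => fCoeff w y q.2) x.1)
      (ContinuousLinearMap.fst ℝ (Fin m → ℝ) ℝ)).trans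
      (mul_le_of_le_one_right (norm_nonneg _) hfst)
    have hO : ‖Complex.ofRealCLM.comp (ContinuousLinearMap.snd ℝ (Fin m → ℝ) ℝ)‖ ≤ 1 := by
      refine (ContinuousLinearMap.opNorm_comp_le _ _).trans ?_
      rw [Complex.ofRealCLM_norm, one_mul]
      exact ContinuousLinearMap.norm_snd_le _ _ _
    have hone : 1 ≤ x' * z := by nlinarith
    set P := (K * (x' ^ 4)⁻¹) * (K' * (z ^ 4)⁻¹) with hP
    have hP0 : 0 ≤ P := by positivity
    have hfin : ‖F' q x‖ ≤ (‖κ‖ * (C * (x' * z))) * (P * (x' * z) + (P + P)) := by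
      simp only [F']
      rw [norm_smul, norm_mul]
      refine mul_le_mul (mul_le_mul_of_nonneg_left hb (norm_nonneg _)) ?_ (norm_nonneg _)
        (by positivity)
      refine (norm_add_le _ _).trans (add_le_add ?_ ?_)
      · rw [norm_smul, norm_smul]
        simp only [norm_mul, norm_exp_pos, Complex.norm_I, one_mul, Complex.norm_intCast]
        refine mul_le_mul ?_ ?_ (by positivity) hP0
        · exact mul_le_mul hu1 hw1 (norm_nonneg _) (by positivity)
        · exact (mul_le_of_le_one_right (abs_nonneg _) hO).trans hn
      · rw [norm_smul, norm_exp_pos, one_mul]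
        refine (norm_add_le _ _).trans (add_le_add ?_ ?_)
        · rw [norm_smul]
          exact mul_le_mul hu1 (hB.trans hw2) (norm_nonneg _) (by positivity)
        · rw [norm_smul, hP, mul_comm (K * _)]
          exact mul_le_mul hw1 (hA.trans hu2) (norm_nonneg _) (by positivity)
    refine hfin.trans ?_
    calc _ ≤ (‖κ‖ * (C * (x' * z))) * (P * (x' * z) + (P * (x' * z) + P * (x' * z))) := by
          have : P ≤ P * (x' * z) := le_mul_of_one_le_right hP0 hone
          gcongr
      _ = _ := by
          rw [hP]
          field_simp
          ring
  have hD := hasFDerivAt_tsum_of_isPreconnected (𝕜 := ℝ) (x₀ := p) (x := p)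
    (summable_wt_prod.mul_left (3 * ‖κ‖ * C * K * K')) Metric.isOpen_ball
    (convex_ball p 1).isPreconnected hF' hbound (Metric.mem_ball_self one_pos)
    (bterm_summable' hC hbnd hu hw hup hwp p) (Metric.mem_ball_self one_pos)
  have hBe : Bil c₀ b u w = fun p => ∑' q : ℤ × ℤ, bterm c₀ b u w q p := by
    funext p
    exact Bil_eq hC hbnd hu hw hup hwp p
  have hsF : Summable (fun q => F' q p) :=
    Summable.of_norm_bounded (summable_wt_prod.mul_left (3 * ‖κ‖ * C * K * K'))
      (fun q => hbound q p (Metric.mem_ball_self one_pos))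
  have hu' := contDiff_dir hu ((0 : Fin m → ℝ), (1 : ℝ))
  have hw' := contDiff_dir hw ((0 : Fin m → ℝ), (1 : ℝ))
  have hup' := periodic_dir hup ((0 : Fin m → ℝ), (1 : ℝ))
  have hwp' := periodic_dir hwp ((0 : Fin m → ℝ), (1 : ℝ))
  rw [Bil_eq hC hbnd hu' hw hup' hwp, Bil_eq hC hbnd hu hw' hup hwp', hBe, hD.fderiv,
    ← (bterm_summable' hC hbnd hu' hw hup' hwp p).tsum_add
      (bterm_summable' hC hbnd hu hw' hup hwp' p)]
  have := (ContinuousLinearMap.apply ℝ ℂ ((0 : Fin m → ℝ), (1 : ℝ))).map_tsum hsF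
  simp only [ContinuousLinearMap.apply_apply] at this
  rw [this]
  congr 1
  funext q
  unfold bterm
  rw [fCoeff_dtheta hu hup, fCoeff_dtheta hw hwp]
  simp [F', κ]
  ring

end PartTwo


section PartThree
variable {m : ℕ}

lemma int_series {c : ℤ → ℂ} (hc : Summable (fun n => ‖c n‖)) {g : ℝ → ℂ} (hg : Continuous g) :
    ∫ θ in (0 : ℝ)..(2 * Real.pi), g θ * ∑' n : ℤ, c n * Complex.exp (Complex.I * (n : ℂ) * (θ : ℂ))
    = ∑' n : ℤ, c n * ∫ θ in (0 : ℝ)..(2 * Real.pi),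
        g θ * Complex.exp (Complex.I * (n : ℂ) * (θ : ℂ)) := by
  have h := intervalIntegral.hasSum_integral_of_dominated_convergence (μ := volume)
    (a := 0) (b := 2 * Real.pi)
    (F := fun (n : ℤ) θ => g θ * (c n * Complex.exp (Complex.I * (n : ℂ) * (θ : ℂ))))
    (f := fun θ => g θ * ∑' n : ℤ, c n * Complex.exp (Complex.I * (n : ℂ) * (θ : ℂ)))
    (fun n θ => ‖g θ‖ * ‖c n‖)
    (fun n => (by fun_prop : Continuous _).aestronglyMeasurable)
    (fun n => Filter.Eventually.of_forall fun θ _ => by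
      rw [norm_mul, norm_mul, norm_exp_pos, mul_one])
    (Filter.Eventually.of_forall fun θ _ => hc.mul_left _)
    (by
      simp_rw [tsum_mul_left]
      exact Continuous.intervalIntegrable (by fun_prop) _ _)
    (Filter.Eventually.of_forall fun θ _ => by
      apply HasSum.mul_left
      apply Summable.hasSum
      apply Summable.of_norm
      simpa only [norm_mul, norm_exp_pos, mul_one] using hc)
  rw [← h.tsum_eq]
  congr 1
  funext n
  rw [← intervalIntegral.integral_const_mul]
  congr 1
  funext θ
  ring

lemma orth (k n : ℤ) : ∫ θ in (0 : ℝ)..(2 * Real.pi),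
    Complex.exp (-Complex.I * (k : ℂ) * (θ : ℂ)) * Complex.exp (Complex.I * (n : ℂ) * (θ : ℂ))
    = if n = k then 2 * (Real.pi : ℂ) else 0 := by
  have h : ∀ θ : ℝ, Complex.exp (-Complex.I * (k : ℂ) * (θ : ℂ)) *
      Complex.exp (Complex.I * (n : ℂ) * (θ : ℂ)) =
      Complex.exp ((Complex.I * ((n - k : ℤ) : ℂ)) * (θ : ℂ)) := by
    intro θ
    rw [← Complex.exp_add]
    congr 1
    push_cast
    ring
  simp_rw [h]
  split_ifs with hnk
  · subst hnk
    simp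
  · rw [integral_exp_mul_complex]
    · have := Complex.exp_int_mul_two_pi_mul_I (n - k)
      have h2 : Complex.I * ((n - k : ℤ) : ℂ) * ((2 * Real.pi : ℝ) : ℂ) =
          ((n - k : ℤ) : ℂ) * (2 * Real.pi * Complex.I) := by push_cast; ring
      rw [h2, this]
      simp
    · apply mul_ne_zero Complex.I_ne_zero
      exact_mod_cast sub_ne_zero.2 hnk

def bcoef (c₀ : ℂ) (b : ℤ → ℤ → ℤ → ℂ) (u w : (Fin m → ℝ) × ℝ → ℂ) (y : Fin m → ℝ) (n : ℤ) : ℂ :=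
  -(1 / (4 * (Real.pi : ℂ) * c₀)) *
        ∑' n' : ℤ, b (-n) (n - n') n' * fCoeff u y (n - n') * fCoeff w y n'

lemma summable_bcoef {c₀ : ℂ} {b : ℤ → ℤ → ℤ → ℂ} {C : ℝ} (hC : 0 < C)
    (hbnd : KernelBound b C) {u w : (Fin m → ℝ) × ℝ → ℂ}
    (hu : ContDiff ℝ (⊤ : ℕ∞) u) (hw : ContDiff ℝ (⊤ : ℕ∞) w)
    (hup : Periodic2pi u) (hwp : Periodic2pi w) (y : Fin m → ℝ) :
    Summable (fun n => ‖bcoef c₀ b u w y n‖) := by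
  have hS := bterm_summable (c₀ := c₀) hC hbnd hu hw hup hwp y
  have hS1 := hS.prod.mul_left ‖(-(1 / (4 * (Real.pi : ℂ) * c₀)))‖
  refine Summable.of_nonneg_of_le (fun n => norm_nonneg _) (fun n => ?_) hS1
  unfold bcoef
  rw [norm_mul]
  gcongr
  have h2 := norm_tsum_le_tsum_norm (hS.prod_factor n)
  simpa only [mul_assoc] using h2

lemma fCoeff_Bil {c₀ : ℂ} {b : ℤ → ℤ → ℤ → ℂ} {C : ℝ} (hC : 0 < C)
    (hbnd : KernelBound b C) {u w : (Fin m → ℝ) × ℝ → ℂ}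
    (hu : ContDiff ℝ (⊤ : ℕ∞) u) (hw : ContDiff ℝ (⊤ : ℕ∞) w)
    (hup : Periodic2pi u) (hwp : Periodic2pi w) (y : Fin m → ℝ) (k : ℤ) :
    fCoeff (Bil c₀ b u w) y k = bcoef c₀ b u w y k := by
  have hS := summable_bcoef (c₀ := c₀) hC hbnd hu hw hup hwp y
  have h := int_series hS (g := fun θ => Complex.exp (-Complex.I * (k : ℂ) * (θ : ℂ)))
    (by fun_prop)
  unfold fCoeff
  have h1 : ∀ θ : ℝ, Bil c₀ b u w (y, θ) * Complex.exp (-Complex.I * (k : ℂ) * (θ : ℂ)) =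
      Complex.exp (-Complex.I * (k : ℂ) * (θ : ℂ)) *
      ∑' n : ℤ, bcoef c₀ b u w y n * Complex.exp (Complex.I * (n : ℂ) * (θ : ℂ)) :=
    fun θ => mul_comm _ _
  simp_rw [h1]
  rw [h]
  simp_rw [orth]
  rw [tsum_eq_single k]
  · simp only [if_true]
    have : (Real.pi : ℂ) ≠ 0 := by exact_mod_cast Real.pi_ne_zero
    field_simp
  · intro n hn
    simp [hn]

lemma fiber_eq {c₀ : ℂ} {b : ℤ → ℤ → ℤ → ℂ} {C : ℝ} (hC : 0 < C)
    (hbnd : KernelBound b C) {u w : (Fin m → ℝ) × ℝ → ℂ}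
    (hu : ContDiff ℝ (⊤ : ℕ∞) u) (hw : ContDiff ℝ (⊤ : ℕ∞) w)
    (hup : Periodic2pi u) (hwp : Periodic2pi w) (y : Fin m → ℝ) :
    ∫ θ in (0 : ℝ)..(2 * Real.pi), u (y, θ) * Hil (Bil c₀ b u w) (y, θ) =
     ∑' n : ℤ, (-Complex.I * ((n.sign : ℤ) : ℂ)) * bcoef c₀ b u w y n *
       (2 * Real.pi * fCoeff u y (-n)) := by
  have hS := summable_bcoef (c₀ := c₀) hC hbnd hu hw hup hwp y
  have hsg : ∀ n : ℤ, ‖((n.sign : ℤ) : ℂ)‖ ≤ 1 := by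
    intro n
    rcases Int.sign_trichotomy n with h | h | h <;> simp [h]
  have hS' : Summable (fun n : ℤ =>
      ‖(-Complex.I * ((n.sign : ℤ) : ℂ)) * bcoef c₀ b u w y n‖) := by
    refine Summable.of_nonneg_of_le (fun n => norm_nonneg _) (fun n => ?_) hS
    rw [norm_mul, norm_mul, norm_neg, Complex.norm_I, one_mul]
    exact mul_le_of_le_one_left (norm_nonneg _) (hsg n)
  have h := int_series hS' (fiber_cont hu.continuous y)
  unfold Hil
  simp only [fCoeff_Bil hC hbnd hu hw hup hwp]
  rw [h]
  congr 1
  funext n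
  congr 1
  unfold fCoeff
  have : (Real.pi : ℂ) ≠ 0 := by exact_mod_cast Real.pi_ne_zero
  field_simp
  congr 1
  funext θ
  congr 2
  push_cast
  ring

def klE : ℤ × ℤ ≃ ℤ × ℤ where
  toFun q := (-q.1, -q.1 - q.2)
  invFun q := (-q.1, q.1 - q.2)
  left_inv q := by ext <;> simp
  right_inv q := by ext <;> simp

def shE : ℤ × ℤ ≃ ℤ × ℤ where
  toFun q := (q.1, -q.1 - q.2)
  invFun q := (q.1, -q.1 - q.2)
  left_inv q := by ext <;> simp
  right_inv q := by ext <;> simp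

lemma sign_kernel {b : ℤ → ℤ → ℤ → ℂ} {C : ℝ} (hC : 0 < C) (hbnd : KernelBound b C) (k l : ℤ) :
    ‖(((k.sign : ℤ) : ℂ) + ((l.sign : ℤ) : ℂ)) * b k l (-k - l)‖ ≤
      2 * C * ((-k - l : ℤ) : ℝ) ^ 2 := by
  have hb : ‖b k l (-k - l)‖ ≤ C * |((k * l : ℤ) : ℝ)| := by
    refine (hbnd _ _ _).trans ?_
    gcongr
    exact (min_le_left _ _).trans (min_le_left _ _)
  rw [norm_mul]
  have hs : ‖((k.sign : ℤ) : ℂ) + ((l.sign : ℤ) : ℂ)‖ ≤ 2 := by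
    refine (norm_add_le _ _).trans ?_
    have hsg : ∀ n : ℤ, ‖((n.sign : ℤ) : ℂ)‖ ≤ 1 := by
      intro n
      rcases Int.sign_trichotomy n with h | h | h <;> simp [h]
    linarith [hsg k, hsg l]
  by_cases hkl : 0 ≤ k * l
  · have h1 : |((k * l : ℤ) : ℝ)| ≤ ((-k - l : ℤ) : ℝ) ^ 2 := by
      have h0 : (0 : ℝ) ≤ ((k * l : ℤ) : ℝ) := by exact_mod_cast hkl
      rw [abs_of_nonneg h0]
      push_cast at h0 ⊢
      nlinarith [sq_nonneg (k : ℝ), sq_nonneg (l : ℝ)]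
    calc _ ≤ 2 * (C * |((k * l : ℤ) : ℝ)|) := by gcongr
      _ ≤ 2 * (C * ((-k - l : ℤ) : ℝ) ^ 2) := by gcongr
      _ = _ := by ring
  · have : ((k.sign : ℤ) : ℂ) + ((l.sign : ℤ) : ℂ) = 0 := by
      rw [not_le, mul_neg_iff] at hkl
      rcases hkl with ⟨h1, h2⟩ | ⟨h1, h2⟩
      · rw [Int.sign_eq_one_of_pos h1, Int.sign_eq_neg_one_of_neg h2]; simp
      · rw [Int.sign_eq_one_of_pos h2, Int.sign_eq_neg_one_of_neg h1]; simp
    rw [this]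
    simp
    positivity

lemma summable_coef {u : (Fin m → ℝ) × ℝ → ℂ} (hu : ContDiff ℝ (⊤ : ℕ∞) u) (hup : Periodic2pi u)
    (y : Fin m → ℝ) : Summable (fun n : ℤ => (n : ℝ) ^ 2 * ‖fCoeff u y n‖) ∧
      Summable (fun n : ℤ => ‖fCoeff u y n‖ ^ 2) ∧ ∃ K, ∀ n, ‖fCoeff u y n‖ ≤ K := by
  obtain ⟨K, hK, hKu⟩ := fCoeff_decay hu hup y
  have hy := Metric.mem_ball_self (x := y) one_pos
  have hb : ∀ n, ‖fCoeff u y n‖ ≤ K * (wt n ^ 4)⁻¹ := fun n => (hKu y hy n).1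
  refine ⟨?_, ?_, K, ?_⟩
  · refine Summable.of_nonneg_of_le (fun n => by positivity) (fun n => ?_) (summable_wt.mul_left K)
    have h0 := wt_pos n
    have h1 : (n : ℝ) ^ 2 ≤ wt n ^ 2 := by
      rw [← sq_abs (n : ℝ)]
      unfold wt
      gcongr
      linarith
    calc _ ≤ wt n ^ 2 * (K * (wt n ^ 4)⁻¹) := by gcongr; exact hb n
      _ = _ := by field_simp
  · refine Summable.of_nonneg_of_le (fun n => by positivity) (fun n => ?_)
      (summable_wt.mul_left (K ^ 2))
    have h0 := wt_pos n
    calc _ ≤ (K * (wt n ^ 4)⁻¹) ^ 2 := by gcongr; exact hb n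
      _ = K ^ 2 * (wt n ^ 8)⁻¹ := by field_simp
      _ ≤ _ := by
        gcongr
        · exact wt_one_le n
        · norm_num
  · intro n
    refine (hb n).trans (mul_le_of_le_one_right hK ?_)
    exact inv_le_one_of_one_le₀ (one_le_pow₀ (wt_one_le n))

set_option maxHeartbeats 1000000 in
lemma fiber_bound {c₀ : ℂ} (hc₀ : c₀ ≠ 0) {b : ℤ → ℤ → ℤ → ℂ} {C : ℝ} (hC : 0 < C)
    (hsym : KernelSymm b)
    (hbnd : KernelBound b C) {u w : (Fin m → ℝ) × ℝ → ℂ}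
    (hu : ContDiff ℝ (⊤ : ℕ∞) u) (hw : ContDiff ℝ (⊤ : ℕ∞) w)
    (hup : Periodic2pi u) (hwp : Periodic2pi w) (y : Fin m → ℝ) :
    ‖∫ θ in (0 : ℝ)..(2 * Real.pi), u (y, θ) * Hil (Bil c₀ b u w) (y, θ)‖ ≤
      (C / (2 * ‖c₀‖)) * (∑' n : ℤ, (n : ℝ) ^ 2 * ‖fCoeff w y n‖) * ∑' n : ℤ, ‖fCoeff u y n‖ ^ 2 := by
  rw [fiber_eq hC hbnd hu hw hup hwp]
  obtain ⟨-, hE, K, hK⟩ := summable_coef hu hup y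
  obtain ⟨hA, -, -⟩ := summable_coef hw hwp y
  have hS := bterm_summable (c₀ := c₀) hC hbnd hu hw hup hwp y
  set κ : ℂ := -(1 / (4 * (Real.pi : ℂ) * c₀)) with hκ
  have hπ := Real.pi_pos
  have hc0 : 0 < ‖c₀‖ := norm_pos_iff.2 hc₀
  have hκn : ‖κ‖ = 1 / (4 * Real.pi * ‖c₀‖) := by
    rw [hκ]
    simp [abs_of_pos hπ]
  have hsg : ∀ n : ℤ, ‖((n.sign : ℤ) : ℂ)‖ ≤ 1 := by
    intro n
    rcases Int.sign_trichotomy n with h | h | h <;> simp [h]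
  set A := ∑' n : ℤ, (n : ℝ) ^ 2 * ‖fCoeff w y n‖
  set E := ∑' n : ℤ, ‖fCoeff u y n‖ ^ 2
  set G : ℤ × ℤ → ℂ := fun q => (-Complex.I * ((q.1.sign : ℤ) : ℂ)) *
    (κ * (b (-q.1) (q.1 - q.2) q.2 * (fCoeff u y (q.1 - q.2) * fCoeff w y q.2))) *
      (2 * Real.pi * fCoeff u y (-q.1)) with hG
  have hGs : Summable G := by
    apply Summable.of_norm
    refine Summable.of_nonneg_of_le (fun q => norm_nonneg _) (fun q => ?_)
      (hS.mul_left (‖κ‖ * (2 * Real.pi * K)))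
    have h2 : ‖(2 * Real.pi * fCoeff u y (-q.1) : ℂ)‖ ≤ 2 * Real.pi * K := by
      rw [norm_mul]
      have : ‖(2 * Real.pi : ℂ)‖ = 2 * Real.pi := by simp [abs_of_pos hπ]
      rw [this]
      gcongr
      exact hK _
    simp only [hG]
    rw [norm_mul, norm_mul (-Complex.I * _), norm_mul κ, norm_mul (-Complex.I), norm_neg,
      Complex.norm_I, one_mul]
    calc _ ≤ 1 * (‖κ‖ * ‖b (-q.1) (q.1 - q.2) q.2 *
          (fCoeff u y (q.1 - q.2) * fCoeff w y q.2)‖) * (2 * Real.pi * K) := by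
          gcongr
          exact hsg _
      _ = _ := by ring
  have hJ : ∑' n : ℤ, (-Complex.I * ((n.sign : ℤ) : ℂ)) * bcoef c₀ b u w y n *
       (2 * Real.pi * fCoeff u y (-n)) = ∑' q, G q := by
    rw [hGs.tsum_prod]
    congr 1
    funext n
    unfold bcoef
    simp only [hG]
    rw [tsum_mul_right, tsum_mul_left, tsum_mul_left]
    simp only [mul_assoc, hκ]
  rw [hJ]
  set T : ℤ × ℤ → ℂ := fun q => (2 * Real.pi * Complex.I * κ) * (((q.1.sign : ℤ) : ℂ) *
    b q.1 q.2 (-q.1 - q.2)) * (fCoeff u y q.1 * fCoeff u y q.2 * fCoeff w y (-q.1 - q.2)) with hT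
  have hGT : ∀ q, G (klE q) = T q := by
    intro q
    simp only [hG, hT, klE, Equiv.coe_fn_mk, neg_neg]
    rw [show -q.1 - (-q.1 - q.2) = q.2 by ring, Int.sign_neg]
    push_cast
    ring
  have hTs : Summable T := by
    have := klE.summable_iff.2 hGs
    exact this.congr hGT
  have hGT2 : ∑' q, G q = ∑' q, T q := by
    rw [← klE.tsum_eq G]
    exact tsum_congr hGT
  have hTsw : Summable (fun q : ℤ × ℤ => T q.swap) := (Equiv.prodComm ℤ ℤ).summable_iff.2 hTs
  have hsw : ∑' q : ℤ × ℤ, T q.swap = ∑' q, T q := (Equiv.prodComm ℤ ℤ).tsum_eq T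
  have h2T : 2 * ∑' q, T q = ∑' q : ℤ × ℤ, (T q + T q.swap) := by
    rw [hTs.tsum_add hTsw, hsw]
    ring
  set R : ℤ × ℤ → ℝ := fun q => ‖fCoeff u y q.1‖ ^ 2 *
    (((-q.1 - q.2 : ℤ) : ℝ) ^ 2 * ‖fCoeff w y (-q.1 - q.2)‖) with hR
  have hprod := Summable.mul_of_nonneg hE hA (fun n => by positivity) (fun n => by positivity)
  have hRs : Summable R := shE.summable_iff.2 hprod
  have hRt : ∑' q, R q = E * A := by
    rw [hE.tsum_mul_tsum hA hprod]
    exact shE.tsum_eq (fun q : ℤ × ℤ => ‖fCoeff u y q.1‖ ^ 2 * ((q.2 : ℝ) ^ 2 * ‖fCoeff w y q.2‖))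
  have hRsw : Summable (fun q : ℤ × ℤ => R q.swap) := (Equiv.prodComm ℤ ℤ).summable_iff.2 hRs
  have hRswt : ∑' q : ℤ × ℤ, R q.swap = E * A := by
    rw [← hRt]
    exact (Equiv.prodComm ℤ ℤ).tsum_eq R
  have hbd : ∀ q : ℤ × ℤ, ‖T q + T q.swap‖ ≤ (2 * Real.pi * ‖κ‖ * C) * (R q + R q.swap) := by
    intro q
    have e1 : T q + T q.swap = (2 * Real.pi * Complex.I * κ) *
        ((((q.1.sign : ℤ) : ℂ) + ((q.2.sign : ℤ) : ℂ)) * b q.1 q.2 (-q.1 - q.2)) *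
        (fCoeff u y q.1 * fCoeff u y q.2 * fCoeff w y (-q.1 - q.2)) := by
      simp only [hT, Prod.fst_swap, Prod.snd_swap]
      rw [show -q.2 - q.1 = -q.1 - q.2 by ring, (hsym q.2 q.1 _).1]
      ring
    rw [e1]
    have h1 := sign_kernel hC hbnd q.1 q.2
    rw [norm_mul, norm_mul (2 * Real.pi * Complex.I * κ), norm_mul (_ * _) (fCoeff w y _),
      norm_mul (fCoeff u y _)]
    have h3 : ‖2 * Real.pi * Complex.I * κ‖ = 2 * Real.pi * ‖κ‖ := by
      simp [abs_of_pos hπ]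
    rw [h3]
    simp only [hR, Prod.fst_swap, Prod.snd_swap]
    rw [show -q.2 - q.1 = -q.1 - q.2 by ring]
    set N := ‖fCoeff w y (-q.1 - q.2)‖
    set a := ‖fCoeff u y q.1‖
    set a' := ‖fCoeff u y q.2‖
    have hN : 0 ≤ N := norm_nonneg _
    calc _ ≤ (2 * Real.pi * ‖κ‖) * (2 * C * ((-q.1 - q.2 : ℤ) : ℝ) ^ 2) * (a * a' * N) := by
          gcongr
      _ = (2 * Real.pi * ‖κ‖ * C) * (((-q.1 - q.2 : ℤ) : ℝ) ^ 2 * N) * (2 * a * a') := by ring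
      _ ≤ (2 * Real.pi * ‖κ‖ * C) * (((-q.1 - q.2 : ℤ) : ℝ) ^ 2 * N) * (a ^ 2 + a' ^ 2) := by
          gcongr
          exact two_mul_le_add_sq a a'
      _ = _ := by ring
  have hfin : ‖2 * ∑' q, T q‖ ≤ (2 * Real.pi * ‖κ‖ * C) * (E * A + E * A) := by
    rw [h2T, ← hRt]
    nth_rw 2 [hRt]
    rw [← hRswt, ← hRs.tsum_add hRsw, ← tsum_mul_left]
    exact tsum_of_norm_bounded ((hRs.add hRsw).mul_left _).hasSum hbd
  rw [norm_mul, Complex.norm_ofNat, hκn] at hfin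
  rw [hGT2]
  have : 2 * Real.pi * (1 / (4 * Real.pi * ‖c₀‖)) * C * (E * A + E * A) =
    2 * (C / (2 * ‖c₀‖) * A * E) := by
    field_simp
    ring
  linarith

lemma parseval {g : (Fin m → ℝ) × ℝ → ℂ} (hg : Continuous g) (y : Fin m → ℝ) :
    HasSum (fun n : ℤ => ‖fCoeff g y n‖ ^ 2)
      ((2 * Real.pi)⁻¹ * ∫ θ in (0 : ℝ)..(2 * Real.pi), ‖g (y, θ)‖ ^ 2) := by
  have hgc := fiber_cont hg y
  have hL : MemLp (fun θ : ℝ => g (y, θ)) 2 (volume.restrict (Set.Ioc 0 (2 * Real.pi))) := by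
    have h1 : MemLp (fun θ : ℝ => g (y, θ)) 2 (volume.restrict (Set.Icc 0 (2 * Real.pi))) := by
      obtain ⟨K, hK⟩ := (isCompact_Icc (a := (0 : ℝ)) (b := 2 * Real.pi)).exists_bound_of_continuousOn
        hgc.continuousOn
      refine MemLp.of_bound hgc.aestronglyMeasurable K ?_
      exact (ae_restrict_iff' measurableSet_Icc).2 (Filter.Eventually.of_forall hK)
    exact h1.mono_measure (Measure.restrict_mono Set.Ioc_subset_Icc_self le_rfl)
  have h := hasSum_sq_fourierCoeffOn Real.two_pi_pos hL
  simp only [sub_zero, smul_eq_mul] at h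
  convert h using 3 with n
  rw [fourierCoeffOn_eq_integral]
  unfold fCoeff
  simp only [sub_zero, fourier_coe_apply]
  have hpi : (Real.pi : ℂ) ≠ 0 := by exact_mod_cast Real.pi_ne_zero
  have hfun : (fun θ : ℝ => g (y, θ) * Complex.exp (-Complex.I * (n : ℂ) * (θ : ℂ))) =
      fun θ : ℝ => Complex.exp (2 * Real.pi * Complex.I * ((-n : ℤ) : ℂ) * θ /
        ((2 * Real.pi : ℝ) : ℂ)) • g (y, θ) := by
    funext θ
    rw [smul_eq_mul, mul_comm]
    congr 2
    push_cast
    field_simp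
  rw [hfun, Complex.real_smul]
  push_cast
  rfl

end PartThree


section PartFour
variable {m : ℕ}

lemma dir_comm {g : (Fin m → ℝ) × ℝ → ℂ} (hg : ContDiff ℝ (⊤ : ℕ∞) g)
    (v v' : (Fin m → ℝ) × ℝ) :
    (fun x => fderiv ℝ (fun q => fderiv ℝ g q v) x v') =
      fun x => fderiv ℝ (fun q => fderiv ℝ g q v') x v := by
  funext x
  have hd : DifferentiableAt ℝ (fderiv ℝ g) x :=
    (hg.fderiv_right (m := (⊤ : ℕ∞)) (by simp)).differentiable (by simp) x
  have h : ∀ a c, fderiv ℝ (fun q => fderiv ℝ g q a) x c = fderiv ℝ (fderiv ℝ g) x c a := by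
    intro a c
    have := (hd.hasFDerivAt.clm_apply (hasFDerivAt_const a x)).fderiv
    rw [this]
    simp
  rw [h, h]
  have hs : IsSymmSndFDerivAt ℝ g x := hg.contDiffAt.isSymmSndFDerivAt (by
    simp only [minSmoothness_of_isRCLikeNormedField]
    exact WithTop.coe_le_coe.2 (le_top : (2 : ℕ∞) ≤ ⊤))
  exact hs.eq _ _

lemma dir_dIter_comm {g : (Fin m → ℝ) × ℝ → ℂ} (hg : ContDiff ℝ (⊤ : ℕ∞) g)
    (v v' : (Fin m → ℝ) × ℝ) (k : ℕ) :
    (fun x => fderiv ℝ (dIter v' k g) x v) = dIter v' k (fun x => fderiv ℝ g x v) := by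
  induction k with
  | zero => rfl
  | succ k ih =>
    have h1 := dir_comm (contDiff_thIter hg v' k) v' v
    show (fun x => fderiv ℝ (fun x => fderiv ℝ (dIter v' k g) x v') x v) =
      fun x => fderiv ℝ (dIter v' k (fun x => fderiv ℝ g x v)) x v'
    rw [h1, ih]

def foldD (l : List (Fin m)) (α : Fin m → ℕ) (w : (Fin m → ℝ) × ℝ → ℂ) : (Fin m → ℝ) × ℝ → ℂ :=
  (l.map fun i => dIter (E := (Fin m → ℝ) × ℝ) (F := ℂ) (Pi.single i (1 : ℝ), (0 : ℝ)) (α i)).foldr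
    (fun op h => op h) w

lemma contDiff_foldD {w : (Fin m → ℝ) × ℝ → ℂ} (hw : ContDiff ℝ (⊤ : ℕ∞) w) (α : Fin m → ℕ)
    (l : List (Fin m)) : ContDiff ℝ (⊤ : ℕ∞) (foldD l α w) := by
  induction l with
  | nil => exact hw
  | cons a l ih => exact contDiff_thIter ih _ _

lemma periodic_foldD {w : (Fin m → ℝ) × ℝ → ℂ} (hw : Periodic2pi w) (α : Fin m → ℕ)
    (l : List (Fin m)) : Periodic2pi (foldD l α w) := by
  induction l with
  | nil => exact hw
  | cons a l ih => exact periodic_thIter ih _ _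

lemma contDiff_sp {w : (Fin m → ℝ) × ℝ → ℂ} (hw : ContDiff ℝ (⊤ : ℕ∞) w) (α : Fin m → ℕ)
    (j : ℕ) : ContDiff ℝ (⊤ : ℕ∞) (spThDeriv α j w) :=
  contDiff_thIter (contDiff_foldD hw α (List.finRange m)) _ _

lemma periodic_sp {w : (Fin m → ℝ) × ℝ → ℂ} (hw : Periodic2pi w) (α : Fin m → ℕ)
    (j : ℕ) : Periodic2pi (spThDeriv α j w) :=
  periodic_thIter (periodic_foldD hw α (List.finRange m)) _ _

lemma foldD_congr (w : (Fin m → ℝ) × ℝ → ℂ) {α β : Fin m → ℕ} (l : List (Fin m))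
    (h : ∀ i ∈ l, α i = β i) : foldD l α w = foldD l β w := by
  induction l with
  | nil => rfl
  | cons a l ih =>
    show dIter _ (α a) (foldD l α w) = dIter _ (β a) (foldD l β w)
    rw [h a (by simp), ih (fun i hi => h i (by simp [hi]))]

lemma dir_foldD {w : (Fin m → ℝ) × ℝ → ℂ} (hw : ContDiff ℝ (⊤ : ℕ∞) w) (α : Fin m → ℕ)
    (i : Fin m) (l : List (Fin m)) (hl : l.Nodup) (hi : i ∈ l) :
    (fun x => fderiv ℝ (foldD l α w) x (Pi.single i (1 : ℝ), (0 : ℝ))) =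
      foldD l (α + Pi.single i 1) w := by
  induction l with
  | nil => simp at hi
  | cons a l ih =>
    rw [List.nodup_cons] at hl
    by_cases hai : a = i
    · subst hai
      show dIter _ (α a + 1) (foldD l α w) =
        dIter _ ((α + Pi.single a 1 : Fin m → ℕ) a) (foldD l (α + Pi.single a 1) w)
      rw [foldD_congr w (α := α + Pi.single a 1) (β := α) l]
      · simp
      · intro i hi
        have : i ≠ a := fun h => hl.1 (h ▸ hi)
        simp [this]
    · have hil : i ∈ l := by
        rcases List.mem_cons.1 hi with h | h
        · exact absurd h.symm hai
        · exact h
      have h1 := dir_dIter_comm (contDiff_foldD hw α l) (Pi.single i (1 : ℝ), (0 : ℝ))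
        (Pi.single a (1 : ℝ), (0 : ℝ)) (α a)
      rw [ih hl.2 hil] at h1
      show _ = dIter _ ((α + Pi.single i 1 : Fin m → ℕ) a) (foldD l (α + Pi.single i 1) w)
      have h2 : (α + Pi.single i 1 : Fin m → ℕ) a = α a := by simp [hai]
      rw [h2]
      exact h1

lemma dir_sp {w : (Fin m → ℝ) × ℝ → ℂ} (hw : ContDiff ℝ (⊤ : ℕ∞) w) (α : Fin m → ℕ)
    (j : ℕ) (i : Fin m) :
    (fun x => fderiv ℝ (spThDeriv α j w) x (Pi.single i (1 : ℝ), (0 : ℝ))) =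
      spThDeriv (α + Pi.single i 1) j w := by
  have h1 := dir_dIter_comm (contDiff_foldD hw α (List.finRange m))
    (Pi.single i (1 : ℝ), (0 : ℝ)) ((0 : Fin m → ℝ), (1 : ℝ)) j
  rw [dir_foldD hw α i _ (List.nodup_finRange m) (List.mem_finRange i)] at h1
  exact h1

lemma foldD_zero (w : (Fin m → ℝ) × ℝ → ℂ) (l : List (Fin m)) : foldD l 0 w = w := by
  induction l with
  | nil => rfl
  | cons a l ih =>
    exact ih

lemma sp_zero (w : (Fin m → ℝ) × ℝ → ℂ) : spThDeriv 0 0 w = w := foldD_zero w _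

lemma fCoeff_sp {w : (Fin m → ℝ) × ℝ → ℂ} (hw : ContDiff ℝ (⊤ : ℕ∞) w) (hp : Periodic2pi w)
    (α : Fin m → ℕ) (j : ℕ) (y : Fin m → ℝ) (n : ℤ) :
    fCoeff (spThDeriv α j w) y n = (Complex.I * n) ^ j * fCoeff (spThDeriv α 0 w) y n :=
  fCoeff_thIter (contDiff_foldD hw α (List.finRange m)) (periodic_foldD hp α _) y n j

lemma dir_expand {g : (Fin m → ℝ) × ℝ → ℂ} (v : Fin m → ℝ) :
    (fun x => fderiv ℝ g x (v, 0)) = fun x => ∑ i, (v i : ℂ) *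
      fderiv ℝ g x (Pi.single i (1 : ℝ), (0 : ℝ)) := by
  funext x
  have h : ((v, 0) : (Fin m → ℝ) × ℝ) = ∑ i, v i • (Pi.single i (1 : ℝ), (0 : ℝ)) := by
    ext i
    · simp [Prod.fst_sum, Finset.sum_apply, Pi.single_apply]
    · simp [Prod.snd_sum]
  rw [h, map_sum]
  simp only [map_smul, Complex.real_smul]

lemma dIter_sum (v : (Fin m → ℝ) × ℝ) (c : Fin m → ℂ) {g : Fin m → (Fin m → ℝ) × ℝ → ℂ}
    (hg : ∀ i, ContDiff ℝ (⊤ : ℕ∞) (g i)) (k : ℕ) :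
    dIter v k (fun x => ∑ i, c i * g i x) = fun x => ∑ i, c i * dIter v k (g i) x := by
  induction k with
  | zero => rfl
  | succ k ih =>
    show (fun x => fderiv ℝ (dIter v k (fun x => ∑ i, c i * g i x)) x v) = _
    rw [ih]
    funext x
    have h : HasFDerivAt (fun x => ∑ i, c i * dIter v k (g i) x)
        (∑ i, c i • fderiv ℝ (dIter v k (g i)) x) x := by
      apply HasFDerivAt.fun_sum
      intro i _
      exact (((contDiff_thIter (hg i) v k).differentiable (by simp) x).hasFDerivAt).const_mul (c i)
    rw [h.fderiv]
    simp [dIter]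

lemma fCoeff_sum (c : Fin m → ℂ) {g : Fin m → (Fin m → ℝ) × ℝ → ℂ}
    (hg : ∀ i, Continuous (g i)) (y : Fin m → ℝ) (n : ℤ) :
    fCoeff (fun x => ∑ i, c i * g i x) y n = ∑ i, c i * fCoeff (g i) y n := by
  unfold fCoeff
  simp_rw [Finset.sum_mul]
  rw [intervalIntegral.integral_finsetSum]
  · rw [Finset.mul_sum]
    congr 1
    funext i
    simp_rw [mul_assoc (c i)]
    rw [intervalIntegral.integral_const_mul]
    ring
  · intro i _
    have := fiber_cont (hg i) y
    exact Continuous.intervalIntegrable (by fun_prop) _ _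

lemma mdeg_single (α : Fin m → ℕ) (i : Fin m) : mdeg (α + Pi.single i 1) = mdeg α + 1 := by
  simp [mdeg, Finset.sum_add_distrib]

lemma dIter_bound {w : (Fin m → ℝ) × ℝ → ℂ} (hw : ContDiff ℝ (⊤ : ℕ∞) w) (x : Fin m → ℝ) (n : ℤ)
    (v : Fin m → ℝ) (B : ℝ) (k : ℕ) : ∀ α : Fin m → ℕ,
    (∀ β, mdeg β = mdeg α + k → ‖fCoeff (spThDeriv β 0 w) x n‖ ≤ B) →
    ‖fCoeff (dIter ((v, 0) : (Fin m → ℝ) × ℝ) k (spThDeriv α 0 w)) x n‖ ≤ (m * ‖v‖) ^ k * B := by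
  induction k with
  | zero =>
    intro α h
    simpa [dIter] using h α rfl
  | succ k ih =>
    intro α h
    have e1 : dIter ((v, 0) : (Fin m → ℝ) × ℝ) (k + 1) (spThDeriv α 0 w) =
        fun x => ∑ i, (v i : ℂ) * dIter ((v, 0) : (Fin m → ℝ) × ℝ) k
          (spThDeriv (α + Pi.single i 1) 0 w) x := by
      show (fun x => fderiv ℝ (dIter ((v, 0) : (Fin m → ℝ) × ℝ) k (spThDeriv α 0 w)) x (v, 0)) = _
      rw [dir_dIter_comm (contDiff_sp hw α 0), dir_expand,
        dIter_sum _ _ (fun i => contDiff_dir (contDiff_sp hw α 0) _)]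
      simp_rw [dir_sp hw]
    rw [e1, fCoeff_sum _ (fun i => (contDiff_thIter (contDiff_sp hw _ 0) _ k).continuous)]
    refine (norm_sum_le _ _).trans ?_
    have : ∀ i ∈ (Finset.univ : Finset (Fin m)), ‖(v i : ℂ) *
        fCoeff (dIter ((v, 0) : (Fin m → ℝ) × ℝ) k (spThDeriv (α + Pi.single i 1) 0 w)) x n‖ ≤
        ‖v‖ * ((m * ‖v‖) ^ k * B) := by
      intro i _
      rw [norm_mul, Complex.norm_real]
      refine mul_le_mul (norm_le_pi_norm v i) ?_ (norm_nonneg _) (norm_nonneg _)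
      refine ih _ (fun β hβ => h β ?_)
      rw [hβ, mdeg_single]
      ring
    refine (Finset.sum_le_sum this).trans ?_
    simp
    apply le_of_eq
    ring

abbrev MI (m s : ℕ) := {q : (Fin m → ℕ) × ℕ // mdeg q.1 + q.2 ≤ s}

instance MI_finite (m s : ℕ) : Finite (MI m s) := by
  refine (((Set.Finite.pi' (fun _ : Fin m => Set.finite_Iic s)).prod
    (Set.finite_Iic s)).subset ?_).to_subtype
  intro q hq
  have hq' : mdeg q.1 + q.2 ≤ s := hq
  refine ⟨?_, ?_⟩
  · intro i
    have : q.1 i ≤ mdeg q.1 := Finset.single_le_sum (f := q.1) (fun _ _ => zero_le) (Finset.mem_univ i)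
    show q.1 i ≤ s
    omega
  · show q.2 ≤ s
    omega

instance MI_fintype (m s : ℕ) : Fintype (MI m s) := Fintype.ofFinite _

def Hn (s : ℕ) (w : (Fin m → ℝ) × ℝ → ℂ) (n : ℤ) (x : Fin m → ℝ) : ℝ :=
  ∑ q : MI m s, ‖fCoeff (spThDeriv q.1.1 q.1.2 w) x n‖

lemma Hn_nonneg (s : ℕ) (w : (Fin m → ℝ) × ℝ → ℂ) (n : ℤ) (x : Fin m → ℝ) : 0 ≤ Hn s w n x :=
  Finset.sum_nonneg fun _ _ => norm_nonneg _

lemma le_sum_gen {ι : Type*} [Fintype ι] (f : ι → ℝ) (h0 : ∀ i, 0 ≤ f i) (i : ι) :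
    f i ≤ ∑ i, f i :=
  Finset.single_le_sum (fun i _ => h0 i) (Finset.mem_univ i)

lemma le_Hn (s : ℕ) (w : (Fin m → ℝ) × ℝ → ℂ) (n : ℤ) (x : Fin m → ℝ) (β : Fin m → ℕ) (j : ℕ)
    (h : mdeg β + j ≤ s) : ‖fCoeff (spThDeriv β j w) x n‖ ≤ Hn s w n x :=
  le_sum_gen (fun q : MI m s => ‖fCoeff (spThDeriv q.1.1 q.1.2 w) x n‖)
    (fun _ => norm_nonneg _) ⟨(β, j), h⟩

lemma Hn_cont (s : ℕ) {w : (Fin m → ℝ) × ℝ → ℂ} (hw : ContDiff ℝ (⊤ : ℕ∞) w) (n : ℤ) :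
    Continuous (Hn s w n) := by
  unfold Hn
  exact continuous_finsetSum _ fun q _ => (fCoeff_continuous (contDiff_sp hw _ _) n).norm

lemma dIter_Hn {w : (Fin m → ℝ) × ℝ → ℂ} (hw : ContDiff ℝ (⊤ : ℕ∞) w) (hp : Periodic2pi w)
    {s k : ℕ} (hk : k ≤ s) {n : ℤ} (hn : n ≠ 0) (x v : Fin m → ℝ) (hv : ‖v‖ ≤ |(n : ℝ)|⁻¹) :
    |(n : ℝ)| ^ s * ‖fCoeff (dIter ((v, 0) : (Fin m → ℝ) × ℝ) k w) x n‖ ≤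
      (m + 1 : ℝ) ^ s * Hn s w n x := by
  have hn0 : 0 < |(n : ℝ)| := by positivity
  have h := dIter_bound hw x n v (Hn s w n x / |(n : ℝ)| ^ (s - k)) k 0 (by
    intro β hβ
    rw [le_div_iff₀ (by positivity)]
    have h1 : ‖fCoeff (spThDeriv β (s - k) w) x n‖ ≤ Hn s w n x := by
      have hmem : mdeg β + (s - k) ≤ s := by
        have : mdeg (0 : Fin m → ℕ) = 0 := by simp [mdeg]
        omega
      exact le_Hn s w n x β (s - k) hmem
    rw [fCoeff_sp hw hp, norm_mul, norm_pow, norm_mul, Complex.norm_I, one_mul,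
      Complex.norm_intCast] at h1
    linarith)
  rw [sp_zero] at h
  have hH := Hn_nonneg s w n x
  calc _ ≤ |(n : ℝ)| ^ s * ((m * ‖v‖) ^ k * (Hn s w n x / |(n : ℝ)| ^ (s - k))) := by gcongr
    _ ≤ |(n : ℝ)| ^ s * ((m * |(n : ℝ)|⁻¹) ^ k * (Hn s w n x / |(n : ℝ)| ^ (s - k))) := by gcongr
    _ = (m : ℝ) ^ k * Hn s w n x := by
      have : |(n : ℝ)| ^ s = |(n : ℝ)| ^ k * |(n : ℝ)| ^ (s - k) := by
        rw [← pow_add, Nat.add_sub_cancel' hk]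
      rw [this, mul_pow, inv_pow]
      field_simp
    _ ≤ _ := by
      gcongr
      calc (m : ℝ) ^ k ≤ (m + 1 : ℝ) ^ k := by gcongr; linarith
        _ ≤ _ := pow_le_pow_right₀ (by linarith [(Nat.cast_nonneg m : (0 : ℝ) ≤ m)]) hk

lemma taylor_aux (φ : ℕ → ℝ → ℂ) (hφ : ∀ k t, HasDerivAt (φ k) (φ (k + 1) t) t) (s : ℕ) :
    φ 0 0 = ∑ k ∈ Finset.range (s + 1), ((-1) ^ k / (k.factorial : ℂ)) * φ k 1 +
      (-1) ^ (s + 1) * ∫ t in (0 : ℝ)..1, ((t : ℂ) ^ s / (s.factorial : ℂ)) * φ (s + 1) t := by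
  have hc : ∀ k, Continuous (φ k) := fun k =>
    continuous_iff_continuousAt.2 fun t => (hφ k t).continuousAt
  induction s with
  | zero =>
    have := intervalIntegral.integral_eq_sub_of_hasDerivAt (a := 0) (b := 1)
      (fun t _ => hφ 0 t) ((hc 1).intervalIntegrable _ _)
    simp [this]
  | succ s ih =>
    rw [ih, Finset.sum_range_succ _ (s + 1)]
    have hd : ∀ t : ℝ, HasDerivAt (fun t : ℝ => (t : ℂ) ^ (s + 1) / ((s + 1).factorial : ℂ))
        ((t : ℂ) ^ s / (s.factorial : ℂ)) t := by
      intro t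
      have h1 := ((Complex.ofRealCLM.hasDerivAt (x := t)).pow (s + 1)).div_const
        ((s + 1).factorial : ℂ)
      refine h1.congr_deriv ?_
      have : (s.factorial : ℂ) ≠ 0 := by exact_mod_cast Nat.factorial_ne_zero s
      have : ((s : ℂ) + 1) ≠ 0 := by exact_mod_cast Nat.succ_ne_zero s
      rw [Nat.factorial_succ]
      push_cast
      simp
      field_simp
    have := intervalIntegral.integral_deriv_mul_eq_sub (a := 0) (b := 1)
      (fun t _ => hd t) (fun t _ => hφ (s + 1) t)
      (Continuous.intervalIntegrable (by fun_prop) _ _)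
      ((hc (s + 2)).intervalIntegrable _ _)
    have hc1 := hc (s + 1)
    have hc2 := hc (s + 2)
    rw [intervalIntegral.integral_add (Continuous.intervalIntegrable (by fun_prop) _ _)
      (Continuous.intervalIntegrable (by fun_prop) _ _)] at this
    simp at this
    simp only [Nat.factorial_succ] at this ⊢
    push_cast at this ⊢
    rw [show s + 1 + 1 = s + 2 by ring]
    linear_combination (-1) ^ (s + 1) * this

lemma taylor_bound (φ : ℕ → ℝ → ℂ) (hφ : ∀ k t, HasDerivAt (φ k) (φ (k + 1) t) t) (s : ℕ)
    (h : ℝ → ℝ) (hh : Continuous h) (hb : ∀ k ≤ s + 1, ∀ t, ‖φ k t‖ ≤ h t) :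
    ‖φ 0 0‖ ≤ (s + 1) * h 1 + ∫ t in (0 : ℝ)..1, t ^ s * h t := by
  have hfac : ∀ k : ℕ, (1 : ℝ) ≤ (k.factorial : ℝ) := fun k => by
    exact_mod_cast Nat.one_le_iff_ne_zero.2 (Nat.factorial_ne_zero k)
  rw [taylor_aux φ hφ s]
  refine (norm_add_le _ _).trans (add_le_add ?_ ?_)
  · refine (norm_sum_le _ _).trans ?_
    have : ∀ k ∈ Finset.range (s + 1), ‖((-1) ^ k / (k.factorial : ℂ)) * φ k 1‖ ≤ h 1 := by
      intro k hk
      rw [Finset.mem_range] at hk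
      rw [norm_mul, norm_div, norm_pow, norm_neg, norm_one, one_pow, Complex.norm_natCast]
      have h1 : 1 / (k.factorial : ℝ) ≤ 1 := by
        rw [div_le_one (by linarith [hfac k])]
        exact hfac k
      exact (mul_le_of_le_one_left (norm_nonneg _) h1).trans (hb k hk.le 1)
    refine (Finset.sum_le_sum this).trans ?_
    simp
  · rw [norm_mul, norm_pow, norm_neg, norm_one, one_pow, one_mul]
    refine intervalIntegral.norm_integral_le_of_norm_le zero_le_one ?_
      (Continuous.intervalIntegrable (by fun_prop) _ _)
    refine Filter.Eventually.of_forall fun t ht => ?_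
    rw [norm_mul, norm_div, norm_pow, Complex.norm_real, Complex.norm_natCast, Real.norm_eq_abs,
      abs_of_pos ht.1]
    have := hb (s + 1) le_rfl t
    have h0 := pow_nonneg ht.1.le s
    refine mul_le_mul (div_le_self h0 (hfac s)) this (norm_nonneg _) h0

lemma coef_bound {w : (Fin m → ℝ) × ℝ → ℂ} (hw : ContDiff ℝ (⊤ : ℕ∞) w) (hp : Periodic2pi w)
    (s : ℕ) {n : ℤ} (hn : n ≠ 0) (y v : Fin m → ℝ) (hv : ‖v‖ ≤ |(n : ℝ)|⁻¹) :
    |(n : ℝ)| ^ (s + 1) * ‖fCoeff w y n‖ ≤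
      (m + 1 : ℝ) ^ (s + 1) * ((s + 1) * Hn (s + 1) w n (y + v) +
        ∫ t in (0 : ℝ)..1, t ^ s * Hn (s + 1) w n (y + t • v)) := by
  have hn0 : 0 < |(n : ℝ)| := by positivity
  have hHc := Hn_cont (s + 1) hw n
  set c : ℝ := (m + 1 : ℝ) ^ (s + 1) / |(n : ℝ)| ^ (s + 1) with hc
  have h := taylor_bound
    (fun k t => fCoeff (dIter ((v, 0) : (Fin m → ℝ) × ℝ) k w) (y + t • v) n)
    (fun k t => by
      obtain ⟨L, hL, hLv⟩ := fCoeff_hasFDerivAt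
        (contDiff_thIter hw ((v, 0) : (Fin m → ℝ) × ℝ) k) n (y + t • v)
      have h2 : HasDerivAt (fun t : ℝ => y + t • v) v t := by
        simpa using ((hasDerivAt_id t).smul_const v).const_add y
      have h3 := hL.comp_hasDerivAt t h2
      rw [hLv] at h3
      exact h3) s
    (fun t => c * Hn (s + 1) w n (y + t • v)) (by fun_prop)
    (fun k hk t => by
      have := dIter_Hn hw hp hk hn (y + t • v) v hv
      rw [hc, div_mul_eq_mul_div, le_div_iff₀ (by positivity)]
      linarith)
  simp only [dIter, zero_smul, add_zero, one_smul] at h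
  have e : ∫ t in (0 : ℝ)..1, t ^ s * (c * Hn (s + 1) w n (y + t • v)) =
      c * ∫ t in (0 : ℝ)..1, t ^ s * Hn (s + 1) w n (y + t • v) := by
    rw [← intervalIntegral.integral_const_mul]
    congr 1
    funext t
    ring
  rw [e] at h
  refine (mul_le_mul_of_nonneg_left h (by positivity : 0 ≤ |(n : ℝ)| ^ (s + 1))).trans ?_
  apply le_of_eq
  have hh : |(n : ℝ)| ^ (s + 1) * c = (m + 1 : ℝ) ^ (s + 1) := by
    rw [hc]
    field_simp
  rw [← hh]
  ring

end PartFour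


section PartFive
variable {m : ℕ}

lemma jensen_sq (f : ℝ → ℝ) (hf : Continuous f) :
    (∫ t in (0 : ℝ)..1, f t) ^ 2 ≤ ∫ t in (0 : ℝ)..1, f t ^ 2 := by
  set A := ∫ t in (0 : ℝ)..1, f t with hA
  have h0 : 0 ≤ ∫ t in (0 : ℝ)..1, (f t - A) ^ 2 :=
    intervalIntegral.integral_nonneg zero_le_one fun t _ => sq_nonneg _
  have e : ∫ t in (0 : ℝ)..1, (f t - A) ^ 2 = (∫ t in (0 : ℝ)..1, f t ^ 2) - 2 * A * A + A ^ 2 := by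
    have : (fun t => (f t - A) ^ 2) = fun t => (f t ^ 2 - 2 * A * f t) + A ^ 2 := by
      funext t; ring
    rw [this, intervalIntegral.integral_add (Continuous.intervalIntegrable (by fun_prop) _ _)
      (Continuous.intervalIntegrable (by fun_prop) _ _),
      intervalIntegral.integral_sub (Continuous.intervalIntegrable (by fun_prop) _ _)
      (Continuous.intervalIntegrable (by fun_prop) _ _), intervalIntegral.integral_const_mul, ← hA]
    simp
  nlinarith

lemma dil_int (g : (Fin m → ℝ) → ℝ) (y : Fin m → ℝ) {t : ℝ} (ht : 0 < t) :
    ∫ v, g (y + t • v) = (t ^ m)⁻¹ * ∫ v, g v := by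
  have h1 := Measure.integral_comp_smul (volume : Measure (Fin m → ℝ)) (fun v => g (y + v)) t
  rw [integral_add_left_eq_self g y] at h1
  rw [h1]
  simp [abs_of_pos ht]

lemma dil_integrable {g : (Fin m → ℝ) → ℝ} (hg : Integrable g) (y : Fin m → ℝ) {t : ℝ}
    (ht : 0 < t) : Integrable (fun v => g (y + t • v)) := by
  have := hg.comp_add_left y
  exact (integrable_comp_smul_iff volume (fun v => g (y + v)) ht.ne').2 this

lemma sob_abs {h : (Fin m → ℝ) → ℝ} (hc : Continuous h)
    (hi : Integrable (fun x => h x ^ 2)) {r : ℝ} (hr : 0 < r) {X M : ℝ} (hX0 : 0 ≤ X)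
    (y : Fin m → ℝ) (s : ℕ) (hs : m ≤ 2 * s)
    (hX : ∀ v : Fin m → ℝ, ‖v‖ ≤ r → X ≤ M * ((s + 1) * h (y + v) +
      ∫ t in (0 : ℝ)..1, t ^ s * h (y + t • v))) :
    X ^ 2 * (2 * r) ^ m ≤ 2 * M ^ 2 * ((s + 1) ^ 2 + 1) * ∫ x, h x ^ 2 := by
  set B : Set (Fin m → ℝ) := Metric.closedBall 0 r with hB
  set I := ∫ x, h x ^ 2 with hI
  have hI0 : 0 ≤ I := integral_nonneg fun x => sq_nonneg _
  have hBc : IsCompact B := isCompact_closedBall _ _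
  have hvol : volume.real B = (2 * r) ^ m := by
    rw [hB, Measure.real, Real.volume_pi_closedBall _ hr.le, ENNReal.toReal_ofReal (by positivity)]
    simp
  let F : (Fin m → ℝ) × ℝ → ℝ := fun q => (q.2 ^ s * h (y + q.2 • q.1)) ^ 2
  have hF : Continuous F := by
    show Continuous fun q : (Fin m → ℝ) × ℝ => (q.2 ^ s * h (y + q.2 • q.1)) ^ 2
    fun_prop
  have hFint : Integrable F ((volume.restrict B).prod (volume.restrict (Set.Ioc (0 : ℝ) 1))) := by
    rw [Measure.prod_restrict]
    have : IntegrableOn F (B ×ˢ Set.Icc (0 : ℝ) 1) (volume.prod volume) :=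
      hF.continuousOn.integrableOn_compact (hBc.prod isCompact_Icc)
    exact this.mono_set (Set.prod_mono le_rfl Set.Ioc_subset_Icc_self)
  have hpt : ∀ v ∈ B, X ^ 2 ≤ 2 * M ^ 2 * (s + 1) ^ 2 * h (y + v) ^ 2 +
      2 * M ^ 2 * ∫ t in Set.Ioc (0 : ℝ) 1, F (v, t) := by
    intro v hv
    have hv' : ‖v‖ ≤ r := by simpa [hB] using hv
    have h1 := hX v hv'
    have h2 := jensen_sq (fun t => t ^ s * h (y + t • v)) (by fun_prop)
    rw [← intervalIntegral.integral_of_le zero_le_one]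
    set J := ∫ t in (0 : ℝ)..1, t ^ s * h (y + t • v)
    have h3 : J ^ 2 ≤ ∫ t in (0 : ℝ)..1, F (v, t) := h2
    have h4 : X ^ 2 ≤ (M * ((s + 1) * h (y + v) + J)) ^ 2 := pow_le_pow_left₀ hX0 h1 2
    have h5 : 0 ≤ M ^ 2 * ((s + 1) * h (y + v) - J) ^ 2 := by positivity
    have h6 := mul_le_mul_of_nonneg_left h3 (by positivity : 0 ≤ 2 * M ^ 2)
    nlinarith
  have hi1 : Integrable (fun v => h (y + v) ^ 2) := hi.comp_add_left y
  have hiB : IntegrableOn (fun v => h (y + v) ^ 2) B := hi1.integrableOn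
  have hiF : IntegrableOn (fun v => ∫ t in Set.Ioc (0 : ℝ) 1, F (v, t)) B := hFint.integral_prod_left
  have hint : X ^ 2 * (2 * r) ^ m ≤ 2 * M ^ 2 * (s + 1) ^ 2 * (∫ v in B, h (y + v) ^ 2) +
      2 * M ^ 2 * ∫ v in B, ∫ t in Set.Ioc (0 : ℝ) 1, F (v, t) := by
    have := setIntegral_mono_on (μ := volume) (s := B) (f := fun _ => X ^ 2)
      (integrableOn_const hBc.measure_lt_top.ne)
      ((hiB.const_mul (2 * M ^ 2 * (s + 1) ^ 2)).add (hiF.const_mul (2 * M ^ 2)))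
      hBc.measurableSet hpt
    rw [setIntegral_const, hvol] at this
    simp only [Pi.add_apply] at this
    rw [integral_add (hiB.const_mul _) (hiF.const_mul _), integral_const_mul,
      integral_const_mul] at this
    simpa [mul_comm] using this
  have b1 : ∫ v in B, h (y + v) ^ 2 ≤ I := by
    have := setIntegral_le_integral (s := B) hi1 (Filter.Eventually.of_forall fun x => sq_nonneg _)
    exact this.trans_eq (integral_add_left_eq_self (fun v => h v ^ 2) y)
  have b2 : ∫ v in B, ∫ t in Set.Ioc (0 : ℝ) 1, F (v, t) ≤ I := by
    rw [integral_integral_swap (f := fun v t => F (v, t)) hFint]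
    have hb : ∀ t ∈ Set.Ioc (0 : ℝ) 1, ‖∫ v in B, F (v, t)‖ ≤ I := by
      intro t ht
      have e : (fun v => F (v, t)) = fun v => t ^ (2 * s) * h (y + t • v) ^ 2 := by
        funext v
        show (t ^ s * h (y + t • v)) ^ 2 = _
        ring
      rw [e, Real.norm_of_nonneg (integral_nonneg fun v => mul_nonneg (pow_nonneg ht.1.le _) (sq_nonneg _)),
        integral_const_mul]
      have h1 := setIntegral_le_integral (s := B) (dil_integrable hi y ht.1)
        (Filter.Eventually.of_forall fun x => sq_nonneg _)
      rw [dil_int (fun v => h v ^ 2) y ht.1] at h1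
      have ht0 := pow_pos ht.1 m
      calc _ ≤ t ^ (2 * s) * ((t ^ m)⁻¹ * I) :=
            mul_le_mul_of_nonneg_left h1 (pow_nonneg ht.1.le _)
        _ ≤ t ^ m * ((t ^ m)⁻¹ * I) := by
            refine mul_le_mul_of_nonneg_right (pow_le_pow_of_le_one ht.1.le ht.2 hs) (by positivity)
        _ = I := by field_simp
    have := norm_setIntegral_le_of_norm_le_const (μ := volume) (s := Set.Ioc (0 : ℝ) 1) (by simp) hb
    refine (Real.le_norm_self _).trans (this.trans ?_)
    simp
  have c1 := mul_le_mul_of_nonneg_left b1 (by positivity : 0 ≤ 2 * M ^ 2 * ((s : ℝ) + 1) ^ 2)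
  have c2 := mul_le_mul_of_nonneg_left b2 (by positivity : 0 ≤ 2 * M ^ 2)
  linarith

end PartFive


section PartSix
variable {m : ℕ}

lemma strip_measure : (volume : Measure ((Fin m → ℝ) × ℝ)).restrict (strip m) =
    (volume : Measure (Fin m → ℝ)).prod (volume.restrict (Set.Ioc 0 (2 * Real.pi))) := by
  have : strip m = Set.univ ×ˢ Set.Ioo 0 (2 * Real.pi) := by
    ext p; simp [strip]
  rw [this, Measure.volume_eq_prod, ← Measure.prod_restrict, Measure.restrict_univ,
    restrict_Ioo_eq_restrict_Ioc]

lemma strip_integral {E : Type*} [NormedAddCommGroup E] [NormedSpace ℝ E]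
    (f : (Fin m → ℝ) × ℝ → E) (hf : IntegrableOn f (strip m)) :
    ∫ p in strip m, f p = ∫ x, ∫ θ in (0 : ℝ)..(2 * Real.pi), f (x, θ) := by
  rw [IntegrableOn, strip_measure] at hf
  rw [strip_measure, integral_prod _ hf]
  simp_rw [intervalIntegral.integral_of_le Real.two_pi_pos.le]

lemma decay_int {G : (Fin m → ℝ) × ℝ → ℂ} (hG : Continuous G) {K : ℝ}
    (hK : ∀ p : (Fin m → ℝ) × ℝ, (1 + ‖p.1‖) ^ (m + 1) * ‖G p‖ ≤ K) :
    IntegrableOn (fun p => ‖G p‖ ^ 2) (strip m) := by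
  rw [IntegrableOn, strip_measure]
  have h1 : Integrable (fun x : Fin m → ℝ => (1 + ‖x‖) ^ (-((m : ℝ) + 1))) :=
    integrable_one_add_norm (by simp)
  have h2 : Integrable (fun _ : ℝ => K ^ 2) (volume.restrict (Set.Ioc 0 (2 * Real.pi))) :=
    integrable_const _
  refine (h1.mul_prod h2).mono' (by fun_prop) (Filter.Eventually.of_forall fun p => ?_)
  rw [Real.norm_of_nonneg (by positivity)]
  have hA : (1 : ℝ) ≤ 1 + ‖p.1‖ := by linarith [norm_nonneg p.1]
  have e : (1 + ‖p.1‖) ^ (-((m : ℝ) + 1)) = ((1 + ‖p.1‖) ^ (m + 1))⁻¹ := by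
    rw [Real.rpow_neg (by linarith)]
    congr 1
    exact_mod_cast Real.rpow_natCast (1 + ‖p.1‖) (m + 1)
  rw [e, inv_mul_eq_div, le_div_iff₀ (by positivity)]
  have hP : (1 : ℝ) ≤ (1 + ‖p.1‖) ^ (m + 1) := one_le_pow₀ hA
  have h3 := pow_le_pow_left₀ (by positivity) (hK p) 2
  refine le_trans ?_ h3
  rw [mul_pow, mul_comm]
  gcongr
  exact le_self_pow₀ hP (by norm_num)

lemma fib_int {G : (Fin m → ℝ) × ℝ → ℂ} (hi : IntegrableOn (fun p => ‖G p‖ ^ 2) (strip m)) :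
    Integrable (fun x => ∫ θ in (0 : ℝ)..(2 * Real.pi), ‖G (x, θ)‖ ^ 2) := by
  rw [IntegrableOn, strip_measure] at hi
  simp_rw [intervalIntegral.integral_of_le Real.two_pi_pos.le]
  exact hi.integral_prod_left

lemma coef_int {G : (Fin m → ℝ) × ℝ → ℂ} (hG : ContDiff ℝ (⊤ : ℕ∞) G)
    (hi : IntegrableOn (fun p => ‖G p‖ ^ 2) (strip m)) (n : ℤ) :
    Integrable (fun x => ‖fCoeff G x n‖ ^ 2) := by
  refine ((fib_int hi).const_mul ((2 * Real.pi)⁻¹)).mono'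
    ((fCoeff_continuous hG n).norm.pow 2).aestronglyMeasurable
    (Filter.Eventually.of_forall fun x => ?_)
  rw [Real.norm_of_nonneg (by positivity)]
  exact le_hasSum (parseval hG.continuous x) n (fun _ _ => by positivity)

lemma coef_sum_le {G : (Fin m → ℝ) × ℝ → ℂ} (hG : ContDiff ℝ (⊤ : ℕ∞) G)
    (hi : IntegrableOn (fun p => ‖G p‖ ^ 2) (strip m)) (F : Finset ℤ) :
    ∑ n ∈ F, ∫ x, ‖fCoeff G x n‖ ^ 2 ≤ (2 * Real.pi)⁻¹ * sqL2 G := by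
  rw [← integral_finsetSum _ (fun n _ => coef_int hG hi n), sqL2, strip_integral _ hi,
    ← integral_const_mul]
  refine integral_mono (integrable_finsetSum _ fun n _ => coef_int hG hi n)
    ((fib_int hi).const_mul _) (fun x => ?_)
  exact sum_le_hasSum F (fun _ _ => by positivity) (parseval hG.continuous x)

lemma sp_int {w : (Fin m → ℝ) × ℝ → ℂ} (hw : ContDiff ℝ (⊤ : ℕ∞) w) (hd : SchwartzDecay w)
    (α : Fin m → ℕ) (j : ℕ) : IntegrableOn (fun p => ‖spThDeriv α j w p‖ ^ 2) (strip m) := by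
  obtain ⟨K, hK⟩ := hd (m + 1) α j
  exact decay_int (contDiff_sp hw α j).continuous hK

lemma Hn_sq_le (s : ℕ) (w : (Fin m → ℝ) × ℝ → ℂ) (n : ℤ) (x : Fin m → ℝ) :
    Hn s w n x ^ 2 ≤ (Fintype.card (MI m s) : ℝ) *
      ∑ q : MI m s, ‖fCoeff (spThDeriv q.1.1 q.1.2 w) x n‖ ^ 2 :=
  sq_sum_le_card_mul_sum_sq

lemma integrable_sum_gen {ι : Type*} [Fintype ι] (f : ι → (Fin m → ℝ) → ℝ)
    (hf : ∀ i, Integrable (f i)) : Integrable (fun x => ∑ i, f i x) :=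
  integrable_finsetSum _ fun i _ => hf i

lemma Hn_sum_int {w : (Fin m → ℝ) × ℝ → ℂ} (hw : ContDiff ℝ (⊤ : ℕ∞) w) (hd : SchwartzDecay w)
    (s : ℕ) (n : ℤ) : Integrable (fun x => (Fintype.card (MI m s) : ℝ) *
      ∑ q : MI m s, ‖fCoeff (spThDeriv q.1.1 q.1.2 w) x n‖ ^ 2) := by
  refine Integrable.const_mul ?_ _
  refine integrable_sum_gen (fun (q : MI m s) x => ‖fCoeff (spThDeriv q.1.1 q.1.2 w) x n‖ ^ 2) ?_
  intro q
  exact coef_int (contDiff_sp hw q.1.1 q.1.2) (sp_int hw hd q.1.1 q.1.2) n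

lemma Hn_sq_int {w : (Fin m → ℝ) × ℝ → ℂ} (hw : ContDiff ℝ (⊤ : ℕ∞) w) (hd : SchwartzDecay w)
    (s : ℕ) (n : ℤ) : Integrable (fun x => Hn s w n x ^ 2) := by
  refine (Hn_sum_int hw hd s n).mono' ((Hn_cont s hw n).pow 2).aestronglyMeasurable
    (Filter.Eventually.of_forall fun x => ?_)
  rw [Real.norm_of_nonneg (sq_nonneg _)]
  exact Hn_sq_le s w n x

lemma Hn_total {w : (Fin m → ℝ) × ℝ → ℂ} (hw : ContDiff ℝ (⊤ : ℕ∞) w) (hd : SchwartzDecay w)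
    (s : ℕ) (F : Finset ℤ) :
    ∑ n ∈ F, ∫ x, Hn s w n x ^ 2 ≤
      (Fintype.card (MI m s) : ℝ) * ((2 * Real.pi)⁻¹ * sqHm s w) := by
  have h1 : ∀ n ∈ F, ∫ x, Hn s w n x ^ 2 ≤ (Fintype.card (MI m s) : ℝ) *
      ∑ q : MI m s, ∫ x, ‖fCoeff (spThDeriv q.1.1 q.1.2 w) x n‖ ^ 2 := by
    intro n _
    refine (integral_mono (Hn_sq_int hw hd s n) (Hn_sum_int hw hd s n)
      (fun x => Hn_sq_le s w n x)).trans_eq ?_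
    rw [integral_const_mul, integral_finsetSum]
    exact fun q _ => coef_int (contDiff_sp hw q.1.1 q.1.2) (sp_int hw hd q.1.1 q.1.2) n
  refine (Finset.sum_le_sum h1).trans ?_
  rw [← Finset.mul_sum, Finset.sum_comm, sqHm, tsum_fintype]
  refine mul_le_mul_of_nonneg_left ?_ (Nat.cast_nonneg (α := ℝ) _)
  rw [Finset.mul_sum]
  exact Finset.sum_le_sum fun q _ =>
    coef_sum_le (contDiff_sp hw q.1.1 q.1.2) (sp_int hw hd q.1.1 q.1.2) F

lemma sqL2_nonneg (w : (Fin m → ℝ) × ℝ → ℂ) : 0 ≤ sqL2 w := integral_nonneg fun _ => sq_nonneg _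

lemma sqHm_nonneg (s : ℕ) (w : (Fin m → ℝ) × ℝ → ℂ) : 0 ≤ sqHm s w :=
  tsum_nonneg fun _ => sqL2_nonneg _

def KS (m s : ℕ) : ℝ := 2 * ((m + 1 : ℝ) ^ (s + 1)) ^ 2 * ((s + 1) ^ 2 + 1)

lemma KS_nonneg (m s : ℕ) : 0 ≤ KS m s := by unfold KS; positivity

lemma mode_bound {w : (Fin m → ℝ) × ℝ → ℂ} (hw : ContDiff ℝ (⊤ : ℕ∞) w) (hp : Periodic2pi w)
    (hd : SchwartzDecay w) (s : ℕ) (hs : m + 4 ≤ 2 * s) {n : ℤ} (hn : n ≠ 0) (y : Fin m → ℝ) :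
    |(n : ℝ)| ^ 6 * ‖fCoeff w y n‖ ^ 2 ≤ KS m s * ∫ x, Hn (s + 1) w n x ^ 2 := by
  have hn0 : 0 < |(n : ℝ)| := by positivity
  have hn1 : 1 ≤ |(n : ℝ)| := by exact_mod_cast Int.one_le_abs hn
  have h := sob_abs (Hn_cont (s + 1) hw n) (Hn_sq_int hw hd (s + 1) n) (inv_pos.2 hn0)
    (X := |(n : ℝ)| ^ (s + 1) * ‖fCoeff w y n‖) (M := (m + 1 : ℝ) ^ (s + 1)) (by positivity) y s
    (by omega) (fun v hv => coef_bound hw hp s hn y v hv)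
  refine le_trans ?_ h
  have e : (|(n : ℝ)| ^ (s + 1) * ‖fCoeff w y n‖) ^ 2 * (2 * |(n : ℝ)|⁻¹) ^ m =
      2 ^ m * (|(n : ℝ)| ^ (2 * (s + 1)) / |(n : ℝ)| ^ m) * ‖fCoeff w y n‖ ^ 2 := by
    rw [mul_pow, mul_pow, inv_pow]
    ring
  rw [e]
  refine mul_le_mul_of_nonneg_right ?_ (sq_nonneg _)
  have h1 : |(n : ℝ)| ^ 6 ≤ |(n : ℝ)| ^ (2 * (s + 1)) / |(n : ℝ)| ^ m := by
    rw [le_div_iff₀ (by positivity), ← pow_add]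
    exact pow_le_pow_right₀ hn1 (by omega)
  have h2 : (1 : ℝ) ≤ 2 ^ m := one_le_pow₀ (by norm_num)
  nlinarith [pow_pos hn0 6]

def KT (m s : ℕ) : ℝ := (∑' n : ℤ, (wt n ^ 2)⁻¹) * (4 * KS m s *
  ((Fintype.card (MI m (s + 1)) : ℝ) * (2 * Real.pi)⁻¹))

lemma sup_bound {w : (Fin m → ℝ) × ℝ → ℂ} (hw : ContDiff ℝ (⊤ : ℕ∞) w) (hp : Periodic2pi w)
    (hd : SchwartzDecay w) (s : ℕ) (hs : m + 4 ≤ 2 * s) (y : Fin m → ℝ) :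
    ∑' n : ℤ, (n : ℝ) ^ 2 * ‖fCoeff w y n‖ ≤ Real.sqrt (KT m s) * Real.sqrt (sqHm (s + 1) w) := by
  have hwt : ∀ n : ℤ, 0 < wt n := fun n => by unfold wt; positivity
  have hKT : 0 ≤ KT m s := by
    have := KS_nonneg m s
    have h2 : 0 ≤ ∑' n : ℤ, (wt n ^ 2)⁻¹ := tsum_nonneg fun n => by positivity
    unfold KT
    positivity
  refine Real.tsum_le_of_sum_le (fun n => by positivity) (fun F => ?_)
  rw [← Real.sqrt_mul hKT]
  refine Real.le_sqrt_of_sq_le ?_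
  have e : ∑ n ∈ F, (n : ℝ) ^ 2 * ‖fCoeff w y n‖ =
      ∑ n ∈ F, (wt n)⁻¹ * (wt n * ((n : ℝ) ^ 2 * ‖fCoeff w y n‖)) := by
    refine Finset.sum_congr rfl fun n _ => ?_
    rw [inv_mul_cancel_left₀ (hwt n).ne']
  rw [e]
  refine (Finset.sum_mul_sq_le_sq_mul_sq _ _ _).trans ?_
  have h1 : ∑ n ∈ F, (wt n)⁻¹ ^ 2 ≤ ∑' n : ℤ, (wt n ^ 2)⁻¹ := by
    simp_rw [inv_pow]
    exact summable_wt.sum_le_tsum F (fun n _ => by positivity)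
  have h2 : ∑ n ∈ F, (wt n * ((n : ℝ) ^ 2 * ‖fCoeff w y n‖)) ^ 2 ≤ 4 * KS m s *
      ((Fintype.card (MI m (s + 1)) : ℝ) * ((2 * Real.pi)⁻¹ * sqHm (s + 1) w)) := by
    have h3 : ∀ n ∈ F, (wt n * ((n : ℝ) ^ 2 * ‖fCoeff w y n‖)) ^ 2 ≤
        4 * KS m s * ∫ x, Hn (s + 1) w n x ^ 2 := by
      intro n _
      have hI : 0 ≤ ∫ x, Hn (s + 1) w n x ^ 2 := integral_nonneg fun x => sq_nonneg _
      have hK := KS_nonneg m s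
      by_cases hn : n = 0
      · subst hn
        simp
        positivity
      · have hb := mode_bound hw hp hd s hs hn y
        have hn1 : 1 ≤ |(n : ℝ)| := by exact_mod_cast Int.one_le_abs hn
        have hw2 : wt n ≤ 2 * |(n : ℝ)| := by unfold wt; linarith
        calc _ ≤ (2 * |(n : ℝ)| * ((n : ℝ) ^ 2 * ‖fCoeff w y n‖)) ^ 2 := by
              have := hwt n
              gcongr
          _ = 4 * (|(n : ℝ)| ^ 6 * ‖fCoeff w y n‖ ^ 2) := by
              rw [← sq_abs (n : ℝ)]
              ring
          _ ≤ _ := by linarith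
    refine (Finset.sum_le_sum h3).trans ?_
    rw [← Finset.mul_sum]
    exact mul_le_mul_of_nonneg_left (Hn_total hw hd (s + 1) F)
      (by have := KS_nonneg m s; positivity)
  refine (mul_le_mul h1 h2 (Finset.sum_nonneg fun n _ => sq_nonneg _)
    (tsum_nonneg fun n => by positivity)).trans_eq ?_
  unfold KT
  ring

lemma final_bound {c₀ : ℂ} (hc₀ : c₀ ≠ 0) {b : ℤ → ℤ → ℤ → ℂ} {C : ℝ} (hC : 0 < C)
    (hsym : KernelSymm b) (hbnd : KernelBound b C) {u w : (Fin m → ℝ) × ℝ → ℂ}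
    (hu : ContDiff ℝ (⊤ : ℕ∞) u) (hw : ContDiff ℝ (⊤ : ℕ∞) w) (hup : Periodic2pi u)
    (hwp : Periodic2pi w) (hud : SchwartzDecay u) (hwd : SchwartzDecay w) (s : ℕ)
    (hs : m + 4 ≤ 2 * s) :
    ‖∫ p in strip m, u p * Hil (Bil c₀ b u w) p‖ ≤
      (C / (2 * ‖c₀‖) * Real.sqrt (KT m s) * (2 * Real.pi)⁻¹ + 1) * Real.sqrt (sqHm (s + 1) w) *
        sqL2 u := by
  have hL := sqL2_nonneg u
  have hR : 0 ≤ Real.sqrt (sqHm (s + 1) w) * sqL2 u := by positivity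
  by_cases hi : IntegrableOn (fun p => u p * Hil (Bil c₀ b u w) p) (strip m)
  swap
  · rw [integral_undef hi, norm_zero]
    positivity
  rw [strip_integral _ hi]
  have hui : IntegrableOn (fun p => ‖u p‖ ^ 2) (strip m) := by
    have := sp_int hu hud 0 0
    rwa [sp_zero] at this
  have hb := norm_integral_le_of_norm_le
    (f := fun y => ∫ θ in (0 : ℝ)..(2 * Real.pi), u (y, θ) * Hil (Bil c₀ b u w) (y, θ))
    ((fib_int hui).const_mul (C / (2 * ‖c₀‖) *
      (Real.sqrt (KT m s) * Real.sqrt (sqHm (s + 1) w)) * (2 * Real.pi)⁻¹))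
    (Filter.Eventually.of_forall fun y => by
      refine (fiber_bound hc₀ hC hsym hbnd hu hw hup hwp y).trans ?_
      rw [(parseval hu.continuous y).tsum_eq, ← mul_assoc]
      have h0 : 0 ≤ ∫ θ in (0 : ℝ)..(2 * Real.pi), ‖u (y, θ)‖ ^ 2 :=
        intervalIntegral.integral_nonneg Real.two_pi_pos.le fun _ _ => sq_nonneg _
      have := sup_bound hw hwp hwd s hs y
      gcongr)
  refine hb.trans ?_
  rw [integral_const_mul, ← strip_integral _ hui]
  change _ * sqL2 u ≤ _
  nlinarith

end PartSix

/-- **Properties of the bilinear operator `𝓑`** (Lemma `lembornesB`): `𝓑` is symmetric,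
satisfies the Leibniz rule in `θ`, and obeys the commutator-type bound
`|∫ u 𝓗(𝓑(u,w)) dy dθ| ≤ C' ‖w‖_{H^{m₁}} ‖u‖²_{L²}` for every integer `m₁ > d/2 + 2`. -/
theorem bilinear_operator_properties (d : ℕ) (hd : 2 ≤ d)
    (c₀ : ℂ) (hc₀ : c₀ ≠ 0) (b : ℤ → ℤ → ℤ → ℂ) (C : ℝ) (hC : 0 < C)
    (hsym : KernelSymm b) (hbnd : KernelBound b C) :
    (∀ u w : (Fin (d - 1) → ℝ) × ℝ → ℂ,
      ContDiff ℝ (⊤ : ℕ∞) u → ContDiff ℝ (⊤ : ℕ∞) w → RealValued u → RealValued w →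
      Periodic2pi u → Periodic2pi w → SchwartzDecay u → SchwartzDecay w →
      (Bil c₀ b u w = Bil c₀ b w u) ∧
      (∀ p : (Fin (d - 1) → ℝ) × ℝ,
        fderiv ℝ (Bil c₀ b u w) p ((0 : Fin (d - 1) → ℝ), (1 : ℝ)) =
          Bil c₀ b (fun q => fderiv ℝ u q ((0 : Fin (d - 1) → ℝ), (1 : ℝ))) w p +
            Bil c₀ b u (fun q => fderiv ℝ w q ((0 : Fin (d - 1) → ℝ), (1 : ℝ))) p)) ∧
    (∀ m₁ : ℕ, (d : ℝ) / 2 + 2 < (m₁ : ℝ) →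
      ∃ C' > (0 : ℝ), ∀ u w : (Fin (d - 1) → ℝ) × ℝ → ℂ,
        ContDiff ℝ (⊤ : ℕ∞) u → ContDiff ℝ (⊤ : ℕ∞) w → RealValued u → RealValued w →
        Periodic2pi u → Periodic2pi w → SchwartzDecay u → SchwartzDecay w →
        ‖∫ p in strip (d - 1), u p * Hil (Bil c₀ b u w) p‖ ≤
          C' * Real.sqrt (sqHm m₁ w) * sqL2 u) := by
  refine ⟨fun u w hu hw _ _ hup hwp _ _ => ⟨Bil_symm hsym u w, fun p =>
    Bil_leibniz hC hbnd hu hw hup hwp p⟩, fun m₁ hm => ?_⟩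
  have h1 : d + 4 < 2 * m₁ := by
    have : ((d + 4 : ℕ) : ℝ) < ((2 * m₁ : ℕ) : ℝ) := by
      push_cast at hm ⊢
      linarith
    exact_mod_cast this
  obtain ⟨s, rfl⟩ : ∃ s, m₁ = s + 1 := ⟨m₁ - 1, by omega⟩
  refine ⟨C / (2 * ‖c₀‖) * Real.sqrt (KT (d - 1) s) * (2 * Real.pi)⁻¹ + 1, by positivity, ?_⟩
  intro u w hu hw _ _ hup hwp hud hwd
  exact final_bound hc₀ hC hsym hbnd hu hw hup hwp hud hwd s (by omega)

end
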